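/- A \emph{Morse gauge} is a non-decreasing continuous function $M:[1,\infty)\to[0,\infty)$. For $Q\ge 1$, a $Q$-quasi-geodesic is a continuous map $\gamma:I\to X$ from an interval with $|t-s|/Q-Q\le d(\gamma(s),\gamma(t))\le Q|t-s|+Q$ for all $s,t\in I$; it is \emph{$M$-Morse} if for every $Q'\ge1$ every $Q'$-quasi-geodesic with endpoints $\gamma(s),\gamma(t)$ lies in the closed $M(Q')$-neighbourhood of $\gamma[s,t]$, and \emph{Morse} if it is $M$-Morse for some Morse gauge $M$. A geodesic ray is an isometric embedding of $[0,\infty)$. A space $X$ satisfies the \emph{Morse local-to-global property} if for all $Q\ge 1$ and Morse gauges $M$ there exist $L>0$, $Q'\ge1$ and a Morse gauge $M'$ such that every path, all of whose subpaths $p[s,t]$ with $|t-s|\le L$ are $M$-Morse $Q$-quasi-geodesics, is an $M'$-Morse $Q'$-quasi-geodesic. A geodesic ray $\gamma$ is \emph{strongly contracting} if there is $C$ such that for every point $x$ the closest-point projection to $\gamma$ of the ball of radius $d(x,\gamma)$ around $x$ has diameter at most $C$. An isometric action is \emph{geometric} if it is proper and cocompact. Let $G$ be a finitely generated group acting geometrically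 on a proper geodesic metric space $X$ with basepoint $x_0$. Let $\mathcal M(X)$ denote the set of Morse geodesic rays in $X$ whose starting point lies in the orbit $G\cdot x_0$, let $Z$ be a metrizable topological space on which $G$ acts by homeomorphisms, and let $\rho:\mathcal M(X)\to Z$ be a map. Assume: (a) $X$ is not Gromov hyperbolic, $X$ satisfies the Morse local-to-global property, and there exists a geodesic metric space $X'$ on which $G$ acts geometrically and which contains a strongly contracting geodesic ray; (b) whenever $\gamma_1,\gamma_2\in\mathcal M(X)$ are not at bounded Hausdorff distance from one another, $\rho(\gamma_1)\ne\rho(\gamma_2)$; (c) $\rho(g\cdot\gamma)=g\cdot\rho(\gamma)$ for all $g\in G$ and $\gamma\in\mathcal M(X)$; (d) for every Morse gauge $M$, the image under $\rho$ of the set of $M$-Morse geodesic rays starting at $x_0$ is compact. Let $\mu$ be a probability measure on $G$ whose support generates $G$ as a semigroup. Then every Borel probability measure $\nu$ on $Z$ that is $\mu$-stationary, i.e. $\nu(U)=\sum_{g\in G}\mu(g)\,\nu(g^{-1}U)$ for all Borel sets $U\subseteq Z$, satisfies $\nu(\rho(\mathcal M(X)))=0$. -/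

import Mathlib

open scoped NNReal ENNReal Pointwise

namespace MorseLTG

/-- A Morse gauge: a non-decreasing continuous function `[1, ∞) → [0, ∞)`
(the values of `M` outside `[1, ∞)` are never used). -/
def IsMorseGauge (M : ℝ → ℝ) : Prop :=
  MonotoneOn M (Set.Ici 1) ∧ ContinuousOn M (Set.Ici 1) ∧ ∀ t : ℝ, 1 ≤ t → 0 ≤ M t

section Space

variable {X : Type*} [MetricSpace X]

/-- The restriction of `γ` to `I ⊆ ℝ` is a (continuous) `Q`-quasi-geodesic. -/
def QGeoOn (Q : ℝ) (I : Set ℝ) (γ : ℝ → X) : Prop :=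
  ContinuousOn γ I ∧ ∀ s ∈ I, ∀ t ∈ I,
    |t - s| / Q - Q ≤ dist (γ s) (γ t) ∧ dist (γ s) (γ t) ≤ Q * |t - s| + Q

/-- The restriction of `γ` to `I` is `M`-Morse: every `Q`-quasi-geodesic with endpoints
`γ s` and `γ t` stays in the closed `M Q`-neighbourhood of `γ[s,t]`. -/
def MorseOn (M : ℝ → ℝ) (I : Set ℝ) (γ : ℝ → X) : Prop :=
  ∀ Q : ℝ, 1 ≤ Q → ∀ s ∈ I, ∀ t ∈ I, s ≤ t →
    ∀ (p : ℝ → X) (a b : ℝ), a ≤ b → QGeoOn Q (Set.Icc a b) p →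
      p a = γ s → p b = γ t →
      ∀ u ∈ Set.Icc a b, ∃ v ∈ Set.Icc s t, dist (p u) (γ v) ≤ M Q

/-- The restriction of `p` to `I` is `L`-locally an `M`-Morse `Q`-quasi-geodesic. -/
def LocMorseQGeoOn (Q : ℝ) (M : ℝ → ℝ) (L : ℝ) (I : Set ℝ) (p : ℝ → X) : Prop :=
  ∀ s ∈ I, ∀ t ∈ I, s ≤ t → t - s ≤ L →
    QGeoOn Q (Set.Icc s t) p ∧ MorseOn M (Set.Icc s t) p

/-- `γ : [0, ℓ] → X` is a geodesic segment of length `ℓ ≥ 0` from `x` to `y`. -/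
def IsGeodesicSegment (γ : ℝ → X) (ℓ : ℝ) (x y : X) : Prop :=
  0 ≤ ℓ ∧ γ 0 = x ∧ γ ℓ = y ∧
    ∀ s ∈ Set.Icc 0 ℓ, ∀ t ∈ Set.Icc 0 ℓ, dist (γ s) (γ t) = |t - s|

/-- `A` is `C`-contracting: for every `x`, any two closest-point projections to `A` of points
of the ball of radius `d(x, A)` around `x` are at distance at most `C`. -/
def ContractingSet (C : ℝ) (A : Set X) : Prop :=
  ∀ x : X, ∀ y₁ ∈ Metric.ball x (Metric.infDist x A),
    ∀ y₂ ∈ Metric.ball x (Metric.infDist x A), ∀ p₁ ∈ A, ∀ p₂ ∈ A,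
      dist y₁ p₁ = Metric.infDist y₁ A → dist y₂ p₂ = Metric.infDist y₂ A → dist p₁ p₂ ≤ C

/-- A geodesic ray: an isometric embedding `γ : [0, ∞) → X`. It is strongly contracting if its
image is `C`-contracting for some `C`. -/
def IsStronglyContractingRay (γ : ℝ≥0 → X) : Prop :=
  Isometry γ ∧ ∃ C : ℝ, 0 ≤ C ∧ ContractingSet C (Set.range γ)

/-- `γ : [0, ∞) → X` is an `M`-Morse geodesic ray. -/
def IsMorseRayWith (M : ℝ → ℝ) (γ : ℝ≥0 → X) : Prop :=
  Isometry γ ∧ MorseOn M (Set.Ici 0) (fun t : ℝ => γ t.toNNReal)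

/-- `γ : [0, ∞) → X` is a Morse geodesic ray. -/
def IsMorseRay (γ : ℝ≥0 → X) : Prop :=
  ∃ M : ℝ → ℝ, IsMorseGauge M ∧ IsMorseRayWith M γ

/-- The set of `M`-Morse geodesic rays starting at `x₀`. -/
def morseRaysFrom (M : ℝ → ℝ) (x₀ : X) : Set (ℝ≥0 → X) :=
  {γ | γ 0 = x₀ ∧ IsMorseRayWith M γ}

end Space

/-- `X` is a geodesic metric space. -/
def IsGeodesicSpace (X : Type*) [MetricSpace X] : Prop :=
  ∀ x y : X, ∃ (γ : ℝ → X) (ℓ : ℝ), IsGeodesicSegment γ ℓ x y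

/-- Gromov hyperbolicity: geodesic triangles are uniformly thin. -/
def GromovHyperbolic (X : Type*) [MetricSpace X] : Prop :=
  ∃ δ : ℝ, 0 ≤ δ ∧
    ∀ (x y z : X) (γ₁ γ₂ γ₃ : ℝ → X) (ℓ₁ ℓ₂ ℓ₃ : ℝ),
      IsGeodesicSegment γ₁ ℓ₁ x y → IsGeodesicSegment γ₂ ℓ₂ y z →
      IsGeodesicSegment γ₃ ℓ₃ z x →
      ∀ s ∈ Set.Icc 0 ℓ₁,
        ∃ p ∈ γ₂ '' Set.Icc 0 ℓ₂ ∪ γ₃ '' Set.Icc 0 ℓ₃, dist (γ₁ s) p ≤ δ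

/-- The Morse local-to-global property. -/
def MLTG (X : Type*) [MetricSpace X] : Prop :=
  ∀ Q : ℝ, 1 ≤ Q → ∀ M : ℝ → ℝ, IsMorseGauge M →
    ∃ (L Q' : ℝ) (M' : ℝ → ℝ), 0 < L ∧ 1 ≤ Q' ∧ IsMorseGauge M' ∧
      ∀ I : Set ℝ, I.OrdConnected → ∀ p : ℝ → X,
        LocMorseQGeoOn Q M L I p → QGeoOn Q' I p ∧ MorseOn M' I p

/-- The action of `G` on `X` is geometric: isometric, (metrically) proper and cocompact. -/
def IsGeometricAction (G X : Type*) [Group G] [MetricSpace X] [MulAction G X] : Prop :=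
  (∀ g : G, Isometry (fun x : X => g • x)) ∧
  (∀ (x : X) (r : ℝ), {g : G | dist x (g • x) ≤ r}.Finite) ∧
  (∃ K : Set X, IsCompact K ∧ ∀ x : X, ∃ g : G, ∃ k ∈ K, x = g • k)

/-- The set `𝓜(X)` of Morse geodesic rays in `X` starting at a point of the orbit `G · x₀`. -/
def orbitMorseRays (G : Type*) {X : Type*} [Group G] [MetricSpace X] [MulAction G X] (x₀ : X) :
    Set (ℝ≥0 → X) :=
  {γ | γ 0 ∈ MulAction.orbit G x₀ ∧ IsMorseRay γ}

/-- `ν` is `μ`-stationary: `ν(U) = ∑ g, μ(g) ν(g⁻¹ U)` for every Borel set `U`. -/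
def IsStationary {G Z : Type*} [Group G] [MulAction G Z] [MeasurableSpace Z]
    (μ : PMF G) (ν : MeasureTheory.Measure Z) : Prop :=
  ∀ U : Set Z, MeasurableSet U → ν U = ∑' g : G, μ g * ν (g⁻¹ • U)

end MorseLTG

/-!
Suppose that `W = ρ '' orbitMorseRays G x₀` has positive measure. Countably many Morse gauges cover
all Morse rays, so more than half of the mass of `W` lies on a compact set `B ⊆ W` of points
represented by uniformly Morse rays with uniformly bounded distance to `x₀`. By the maximum
principle for `g ↦ ν (g • B)`, for every finite `F ⊆ G` there is `g` such that all `(f * g) • B`,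
`f ∈ F`, have more than half of the mass of `W`, hence meet pairwise. Two uniformly Morse rays that
represent a common point, starting near `f₁ • g • x₀` and `f₂ • g • x₀`, are asymptotic, so their
starting points are joined by a uniformly Morse quasi-geodesic.

On the other hand, translates of the contracting ray of `X'` give, for every `w` far from the
identity, a finite set `F` such that for each `p` some `f₁, f₂ ∈ F` force every geodesic from
`f₁ • p` to `f₂ • p` to pass near `o` and near `w • o`. Taking `p = g • o` and passing to `X` along
the orbits, `x₀` and `w • x₀` lie near a uniformly Morse quasi-geodesic. As `w` is arbitrary, all
geodesics of `X` are uniformly Morse and `X` is hyperbolic.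
-/

namespace MorseLTG

section QIEmbedding

variable {α β δ : Type*} [PseudoMetricSpace α] [PseudoMetricSpace β] [PseudoMetricSpace δ]
  {A B : ℝ} {f : α → β} {s t : Set α}

/-- The restriction of `f` to `s` is a quasi-isometric embedding, with a single constant `A` and
with the lower bound cleared of denominators. No continuity is required. -/
def QIEmbeddingOn (A : ℝ) (f : α → β) (s : Set α) : Prop :=
  ∀ x ∈ s, ∀ y ∈ s, dist x y ≤ A * dist (f x) (f y) + A ∧ dist (f x) (f y) ≤ A * dist x y + A

namespace QIEmbeddingOn

theorem mono_const (h : QIEmbeddingOn A f s) (hAB : A ≤ B) : QIEmbeddingOn B f s := by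
  intro x hx y hy
  obtain ⟨lower, upper⟩ := h x hx y hy
  exact ⟨lower.trans (by gcongr), upper.trans (by gcongr)⟩

theorem mono_set (h : QIEmbeddingOn A f s) (hts : t ⊆ s) : QIEmbeddingOn A f t :=
  fun x hx y hy => h x (hts hx) y (hts hy)

theorem congr {g : α → β} (h : QIEmbeddingOn A f s) (hfg : Set.EqOn f g s) :
    QIEmbeddingOn A g s := by
  intro x hx y hy
  rw [← hfg hx, ← hfg hy]
  exact h x hx y hy

theorem of_dist_eq (h : ∀ x ∈ s, ∀ y ∈ s, dist (f x) (f y) = dist x y) : QIEmbeddingOn 1 f s := by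
  intro x hx y hy
  rw [h x hx y hy]
  constructor <;> linarith

theorem comp {g : β → δ} {t : Set β} (hg : QIEmbeddingOn B g t) (hf : QIEmbeddingOn A f s)
    (hst : Set.MapsTo f s t) (hA : 1 ≤ A) (hB : 1 ≤ B) : QIEmbeddingOn (2 * A * B) (g ∘ f) s := by
  intro x hx y hy
  obtain ⟨hf₁, hf₂⟩ := hf x hx y hy
  obtain ⟨hg₁, hg₂⟩ := hg (f x) (hst hx) (f y) (hst hy)
  have hAB : A * 1 ≤ A * B := by gcongr
  have hBA : 1 * B ≤ A * B := by gcongr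
  have hd : 0 ≤ A * B * dist (g (f x)) (g (f y)) := by positivity
  have hd' : 0 ≤ A * B * dist x y := by positivity
  constructor
  · calc dist x y ≤ A * (B * dist (g (f x)) (g (f y)) + B) + A := hf₁.trans (by gcongr)
      _ ≤ 2 * A * B * dist (g (f x)) (g (f y)) + 2 * A * B := by linarith
  · calc dist (g (f x)) (g (f y)) ≤ B * (A * dist x y + A) + B := hg₂.trans (by gcongr)
      _ ≤ 2 * A * B * dist x y + 2 * A * B := by linarith

theorem comp_isometry {e : δ → α} {u : Set δ} (h : QIEmbeddingOn A f s) (he : Isometry e)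
    (hus : Set.MapsTo e u s) : QIEmbeddingOn A (f ∘ e) u := by
  intro x hx y hy
  rw [← he.dist_eq]
  exact h _ (hus hx) _ (hus hy)

theorem isometry_comp {e : β → δ} (he : Isometry e) (h : QIEmbeddingOn A f s) :
    QIEmbeddingOn A (e ∘ f) s := by
  intro x hx y hy
  rw [Function.comp_apply, Function.comp_apply, he.dist_eq]
  exact h x hx y hy

theorem union (hs : QIEmbeddingOn A f s) (ht : QIEmbeddingOn A f t)
    (hst : ∀ x ∈ s, ∀ y ∈ t,
      dist x y ≤ A * dist (f x) (f y) + A ∧ dist (f x) (f y) ≤ A * dist x y + A) :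
    QIEmbeddingOn A f (s ∪ t) := by
  rintro x (hx | hx) y (hy | hy)
  · exact hs x hx y hy
  · exact hst x hx y hy
  · rw [dist_comm x, dist_comm (f x)]
    exact hst y hy x hx
  · exact ht x hx y hy

end QIEmbeddingOn

end QIEmbedding

theorem dist_eq_sub_of_le {s t : ℝ} (h : s ≤ t) : dist s t = t - s := by
  rw [dist_comm, Real.dist_eq, abs_of_nonneg (sub_nonneg.2 h)]

section QuasiGeodesics

variable {X : Type*} [MetricSpace X] {Q K D : ℝ} {x y z m p : X} {S T B : Set X}

/-- `S` is the image of a (not necessarily continuous) `Q`-quasi-geodesic from `x` to `y`. Working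
with images rather than parametrizations makes concatenation and subdivision painless. -/
def IsQuasiGeodesic (Q : ℝ) (x y : X) (S : Set X) : Prop :=
  ∃ (a b : ℝ) (q : ℝ → X),
    a ≤ b ∧ QIEmbeddingOn Q q (Set.Icc a b) ∧ q a = x ∧ q b = y ∧ q '' Set.Icc a b = S

/-- `S` is the image of a geodesic from `x` to `y`. -/
def IsGeodesic (x y : X) (S : Set X) : Prop :=
  ∃ (γ : ℝ → X) (ℓ : ℝ), IsGeodesicSegment γ ℓ x y ∧ γ '' Set.Icc 0 ℓ = S

/-- `S` is contained in the closed `D`-neighbourhood of `T`, with distances attained. -/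
def Near (D : ℝ) (S T : Set X) : Prop := ∀ x ∈ S, ∃ y ∈ T, dist x y ≤ D

/-- `S` and `T` diverge linearly from the point `m`. -/
def DivergeAt (K : ℝ) (m : X) (S T : Set X) : Prop :=
  ∀ u ∈ S, ∀ v ∈ T, dist u m + dist m v ≤ K * dist u v + K

/-- `p` is a closest point of `S` to `z`, up to an error of `1`: in a space which is not proper
there need not be an exact closest point. -/
def IsCoarseProj (S : Set X) (z p : X) : Prop := p ∈ S ∧ ∀ s ∈ S, dist z p ≤ dist z s + 1

namespace Near

theorem mono {D' : ℝ} (h : Near D S T) (hD : D ≤ D') : Near D' S T := fun x hx =>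
  let ⟨y, hy, hxy⟩ := h x hx
  ⟨y, hy, hxy.trans hD⟩

theorem trans {D' : ℝ} {U : Set X} (h : Near D S T) (h' : Near D' T U) : Near (D + D') S U := by
  intro x hx
  obtain ⟨y, hy, hxy⟩ := h x hx
  obtain ⟨w, hw, hyw⟩ := h' y hy
  exact ⟨w, hw, (dist_triangle x y w).trans (add_le_add hxy hyw)⟩

end Near

namespace DivergeAt

theorem symm (h : DivergeAt K m S T) : DivergeAt K m T S := by
  intro u hu v hv
  rw [add_comm, dist_comm m, dist_comm u m, dist_comm u v]
  exact h v hv u hu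

theorem mono {S' T' : Set X} (h : DivergeAt K m S T) (hS : S' ⊆ S) (hT : T' ⊆ T) :
    DivergeAt K m S' T' :=
  fun u hu v hv => h u (hS hu) v (hT hv)

end DivergeAt

namespace IsQuasiGeodesic

theorem left_mem (h : IsQuasiGeodesic Q x y S) : x ∈ S := by
  obtain ⟨a, b, q, hab, -, rfl, -, rfl⟩ := h
  exact ⟨a, Set.left_mem_Icc.2 hab, rfl⟩

theorem mono {Q' : ℝ} (h : IsQuasiGeodesic Q x y S) (hQ : Q ≤ Q') : IsQuasiGeodesic Q' x y S := by
  obtain ⟨a, b, q, hab, hq, hends⟩ := h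
  exact ⟨a, b, q, hab, hq.mono_const hQ, hends⟩

theorem symm (h : IsQuasiGeodesic Q x y S) : IsQuasiGeodesic Q y x S := by
  obtain ⟨a, b, q, hab, hq, rfl, rfl, rfl⟩ := h
  have himage : Neg.neg '' Set.Icc (-b) (-a) = Set.Icc a b := by simp
  refine ⟨-b, -a, q ∘ Neg.neg, neg_le_neg hab,
    hq.comp_isometry (IsometryEquiv.neg ℝ).isometry ?_, by simp, by simp, ?_⟩
  · exact himage ▸ Set.mapsTo_image _ _
  · rw [Set.image_comp, himage]

theorem right_mem (h : IsQuasiGeodesic Q x y S) : y ∈ S := h.symm.left_mem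

theorem exists_param_from (h : IsQuasiGeodesic Q x y S) (a : ℝ) :
    ∃ (b : ℝ) (q : ℝ → X),
      a ≤ b ∧ QIEmbeddingOn Q q (Set.Icc a b) ∧ q a = x ∧ q b = y ∧ q '' Set.Icc a b = S := by
  obtain ⟨c, d, q, hcd, hq, rfl, rfl, rfl⟩ := h
  have himage : (fun t => t + (c - a)) '' Set.Icc a (a + (d - c)) = Set.Icc c d := by
    rw [Set.image_add_const_Icc]
    congr 1 <;> ring
  refine ⟨a + (d - c), q ∘ fun t => t + (c - a), by linarith,
    hq.comp_isometry (isometry_add_right _) ?_, ?_, ?_, ?_⟩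
  · exact himage ▸ Set.mapsTo_image _ _
  · exact congrArg q (by ring)
  · exact congrArg q (by ring)
  · rw [Set.image_comp, himage]

theorem split (h : IsQuasiGeodesic Q x y S) (hm : m ∈ S) :
    ∃ S₁ S₂, S = S₁ ∪ S₂ ∧ IsQuasiGeodesic Q x m S₁ ∧ IsQuasiGeodesic Q m y S₂ := by
  obtain ⟨a, b, q, -, hq, rfl, rfl, rfl⟩ := h
  obtain ⟨c, hc, rfl⟩ := hm
  refine ⟨q '' Set.Icc a c, q '' Set.Icc c b, ?_,
    ⟨a, c, q, hc.1, hq.mono_set (Set.Icc_subset_Icc_right hc.2), rfl, rfl, rfl⟩,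
    ⟨c, b, q, hc.2, hq.mono_set (Set.Icc_subset_Icc_left hc.1), rfl, rfl, rfl⟩⟩
  rw [← Set.image_union, Set.Icc_union_Icc_eq_Icc hc.1 hc.2]

theorem exists_subpath {u v : X} (h : IsQuasiGeodesic Q x y S) (hu : u ∈ S) (hv : v ∈ S) :
    ∃ S' ⊆ S, IsQuasiGeodesic Q u v S' := by
  obtain ⟨S₁, S₂, rfl, h₁, h₂⟩ := h.split hu
  rcases hv with hv | hv
  · obtain ⟨T₁, T₂, rfl, -, hT₂⟩ := h₁.split hv
    exact ⟨T₂, fun z hz => Or.inl (Or.inr hz), hT₂.symm⟩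
  · obtain ⟨T₁, T₂, rfl, hT₁, -⟩ := h₂.split hv
    exact ⟨T₁, fun z hz => Or.inr (Or.inl hz), hT₁⟩

theorem map {Y : Type*} [MetricSpace Y] {f : X → Y} {A : ℝ} (h : IsQuasiGeodesic Q x y S)
    (hf : QIEmbeddingOn A f Set.univ) (hQ : 1 ≤ Q) (hA : 1 ≤ A) :
    IsQuasiGeodesic (2 * Q * A) (f x) (f y) (f '' S) := by
  obtain ⟨a, b, q, hab, hq, rfl, rfl, rfl⟩ := h
  exact ⟨a, b, f ∘ q, hab, hf.comp hq (Set.mapsTo_univ _ _) hQ hA, rfl, rfl, Set.image_comp f q _⟩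

theorem smul {G : Type*} [Group G] [MulAction G X] (hG : ∀ g : G, Isometry fun x : X => g • x)
    (g : G) (h : IsQuasiGeodesic Q x y S) : IsQuasiGeodesic Q (g • x) (g • y) (g • S) := by
  obtain ⟨a, b, q, hab, hq, rfl, rfl, rfl⟩ := h
  exact ⟨a, b, (g • ·) ∘ q, hab, hq.isometry_comp (hG g), rfl, rfl, Set.image_comp _ q _⟩

theorem concat (hS : IsQuasiGeodesic Q x m S) (hT : IsQuasiGeodesic Q m y T)
    (hdiv : DivergeAt K m S T) (hQ : 1 ≤ Q) (hK : 1 ≤ K) :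
    IsQuasiGeodesic (3 * Q * K) x y (S ∪ T) := by
  obtain ⟨a, b, p, hab, hp, rfl, hpb, rfl⟩ := hS
  obtain ⟨d, q, hbd, hq, hqb, rfl, rfl⟩ := hT.exists_param_from b
  set r : ℝ → X := fun t => if t ≤ b then p t else q t with hr
  have hrp : Set.EqOn p r (Set.Icc a b) := fun t ht => (if_pos ht.2).symm
  have hrq : Set.EqOn q r (Set.Icc b d) := by
    rintro t ⟨hbt, -⟩
    rcases hbt.eq_or_lt with rfl | hbt
    · simp only [hr, le_refl, if_true, hpb, hqb]
    · simp only [hr, not_le.2 hbt, if_false]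
  have hQK : Q * 1 ≤ Q * K := by gcongr
  have hcross : ∀ s ∈ Set.Icc a b, ∀ t ∈ Set.Icc b d,
      dist s t ≤ 3 * Q * K * dist (r s) (r t) + 3 * Q * K ∧
        dist (r s) (r t) ≤ 3 * Q * K * dist s t + 3 * Q * K := by
    intro s hs t ht
    rw [← hrp hs, ← hrq ht]
    obtain ⟨hp₁, hp₂⟩ := hp s hs b ⟨hab, le_rfl⟩
    obtain ⟨hq₁, hq₂⟩ := hq b ⟨le_rfl, hbd⟩ t ht
    have hst : dist s t = dist s b + dist b t := by
      rw [dist_eq_sub_of_le hs.2, dist_eq_sub_of_le ht.1, dist_eq_sub_of_le (hs.2.trans ht.1)]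
      ring
    have hupper := dist_triangle (p s) m (q t)
    have hlower := hdiv (p s) ⟨s, hs, rfl⟩ (q t) ⟨t, ht, rfl⟩
    have hQlower := mul_le_mul_of_nonneg_left hlower (zero_le_one.trans hQ)
    have hd : 0 ≤ Q * K * dist (p s) (q t) := by positivity
    have hd' : Q * 1 * dist s t ≤ Q * K * dist s t := by gcongr
    have hd'' : 0 ≤ Q * dist s t := by positivity
    rw [hpb] at hp₁ hp₂
    rw [hqb] at hq₁ hq₂
    rw [hst] at hd' hd'' ⊢
    constructor <;> linarith
  have hunion : Set.Icc a b ∪ Set.Icc b d = Set.Icc a d := Set.Icc_union_Icc_eq_Icc hab hbd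
  refine ⟨a, d, r, hab.trans hbd, ?_, (hrp ⟨le_rfl, hab⟩).symm, (hrq ⟨hbd, le_rfl⟩).symm, ?_⟩
  · rw [← hunion]
    exact ((hp.congr hrp).mono_const (by linarith)).union ((hq.congr hrq).mono_const (by linarith))
      hcross
  · rw [← hunion, Set.image_union, hrp.image_eq, hrq.image_eq]

end IsQuasiGeodesic

theorem IsGeodesicSegment.isGeodesic {γ : ℝ → X} {ℓ : ℝ} (h : IsGeodesicSegment γ ℓ x y) :
    IsGeodesic x y (γ '' Set.Icc 0 ℓ) := ⟨γ, ℓ, h, rfl⟩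

theorem IsGeodesicSpace.exists_isGeodesic (hX : IsGeodesicSpace X) (x y : X) :
    ∃ S, IsGeodesic x y S :=
  let ⟨_, _, h⟩ := hX x y
  ⟨_, h.isGeodesic⟩

theorem isGeodesic_image_Icc {η : ℝ → X} {s t : ℝ} (hst : s ≤ t)
    (h : ∀ u ∈ Set.Icc s t, ∀ v ∈ Set.Icc s t, dist (η u) (η v) = |v - u|) :
    IsGeodesic (η s) (η t) (η '' Set.Icc s t) := by
  have himage : (fun u => u + s) '' Set.Icc 0 (t - s) = Set.Icc s t := by
    rw [Set.image_add_const_Icc, zero_add, sub_add_cancel]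
  have hmaps : ∀ u ∈ Set.Icc 0 (t - s), u + s ∈ Set.Icc s t :=
    fun u hu => himage ▸ Set.mem_image_of_mem _ hu
  refine ⟨η ∘ fun u => u + s, t - s, ⟨sub_nonneg.2 hst, by simp, by simp, fun u hu v hv => ?_⟩, ?_⟩
  · rw [Function.comp_apply, Function.comp_apply, h _ (hmaps u hu) _ (hmaps v hv),
      add_sub_add_right_eq_sub]
  · rw [Set.image_comp, himage]

namespace IsGeodesic

theorem isQuasiGeodesic (h : IsGeodesic x y S) (hQ : 1 ≤ Q) : IsQuasiGeodesic Q x y S := by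
  obtain ⟨γ, ℓ, ⟨hℓ, hx, hy, hγ⟩, hS⟩ := h
  refine ⟨0, ℓ, γ, hℓ, (QIEmbeddingOn.of_dist_eq fun s hs t ht => ?_).mono_const hQ, hx, hy, hS⟩
  rw [hγ s hs t ht, dist_comm, Real.dist_eq]

theorem left_mem (h : IsGeodesic x y S) : x ∈ S := (h.isQuasiGeodesic le_rfl).left_mem

theorem right_mem (h : IsGeodesic x y S) : y ∈ S := (h.isQuasiGeodesic le_rfl).right_mem

theorem dist_add_dist {u : X} (h : IsGeodesic x y S) (hu : u ∈ S) :
    dist x u + dist u y = dist x y := by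
  obtain ⟨γ, ℓ, ⟨hℓ, rfl, rfl, hγ⟩, rfl⟩ := h
  obtain ⟨t, ht, rfl⟩ := hu
  have h0 : (0 : ℝ) ∈ Set.Icc 0 ℓ := ⟨le_rfl, hℓ⟩
  have h1 : ℓ ∈ Set.Icc 0 ℓ := ⟨hℓ, le_rfl⟩
  rw [hγ 0 h0 t ht, hγ t ht ℓ h1, hγ 0 h0 ℓ h1, abs_of_nonneg (by linarith [ht.1]),
    abs_of_nonneg (by linarith [ht.2]), abs_of_nonneg (by linarith)]
  ring

end IsGeodesic

theorem exists_isCoarseProj (hS : S.Nonempty) (z : X) : ∃ p, IsCoarseProj S z p := by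
  obtain ⟨p, hp, hzp⟩ := (Metric.infDist_lt_iff hS).1 (lt_add_one (Metric.infDist z S))
  exact ⟨p, hp, fun s hs => hzp.le.trans (by gcongr; exact Metric.infDist_le_dist_of_mem hs)⟩

namespace IsCoarseProj

theorem divergeAt (h : IsCoarseProj S z p) (hB : IsGeodesic z p B) : DivergeAt 3 p B S := by
  intro u hu v hv
  have hadd := hB.dist_add_dist hu
  have hproj := h.2 v hv
  have hzv := dist_triangle z u v
  have hpv := dist_triangle_left p v u
  linarith

theorem isQuasiGeodesic_union {S' : Set X} (h : IsCoarseProj S z p) (hB : IsGeodesic z p B)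
    (hS' : IsQuasiGeodesic Q p y S') (hS : S' ⊆ S) (hQ : 1 ≤ Q) :
    IsQuasiGeodesic (9 * Q) z y (B ∪ S') := by
  convert (hB.isQuasiGeodesic hQ).concat hS' ((h.divergeAt hB).mono subset_rfl hS) hQ
    (by norm_num) using 1
  ring

end IsCoarseProj

namespace IsQuasiGeodesic

theorem exists_extend_left (hX : IsGeodesicSpace X) {k : ℝ} {x' : X}
    (h : IsQuasiGeodesic Q x y S) (hQ : 1 ≤ Q) (hk : 0 ≤ k) (hx : dist x' x ≤ k) :
    ∃ S', S ⊆ S' ∧ IsQuasiGeodesic (3 * Q * (2 * k + 1)) x' y S' ∧ Near k S' S := by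
  obtain ⟨B, hB⟩ := hX.exists_isGeodesic x' x
  have hBk : ∀ u ∈ B, dist u x ≤ k := fun u hu => by
    linarith [hB.dist_add_dist hu, dist_nonneg (x := x') (y := u)]
  refine ⟨B ∪ S, Set.subset_union_right,
    (hB.isQuasiGeodesic hQ).concat h (fun u hu v _ => ?_) hQ (by linarith), ?_⟩
  · have hkd : 0 ≤ k * dist u v := by positivity
    linarith [hBk u hu, dist_triangle_left x v u]
  · rintro u (hu | hu)
    · exact ⟨x, h.left_mem, hBk u hu⟩
    · exact ⟨u, hu, by rwa [dist_self]⟩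

theorem exists_extend (hX : IsGeodesicSpace X) {k : ℝ} {x' y' : X}
    (h : IsQuasiGeodesic Q x y S) (hQ : 1 ≤ Q) (hk : 0 ≤ k) (hx : dist x' x ≤ k)
    (hy : dist y' y ≤ k) :
    ∃ S', S ⊆ S' ∧ IsQuasiGeodesic (9 * Q * (2 * k + 1) ^ 2) x' y' S' ∧ Near (2 * k) S' S := by
  obtain ⟨S₁, hS₁, hq₁, hn₁⟩ := h.exists_extend_left hX hQ hk hx
  obtain ⟨S₂, hS₂, hq₂, hn₂⟩ := hq₁.symm.exists_extend_left hX (by nlinarith) hk hy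
  refine ⟨S₂, hS₁.trans hS₂, ?_, (hn₂.trans hn₁).mono (two_mul k).ge⟩
  convert hq₂.symm using 1
  ring

end IsQuasiGeodesic

theorem exists_mem_forall_lt_add_one {A : Set ℝ} (hne : A.Nonempty) (hA : BddAbove A) :
    ∃ t ∈ A, ∀ s ∈ A, s < t + 1 := by
  obtain ⟨t, ht, hlt⟩ := exists_lt_of_lt_csSup hne (sub_one_lt (sSup A))
  exact ⟨t, ht, fun s hs => (le_csSup hA hs).trans_lt (by linarith)⟩

theorem exists_adjacent_of_not {a b : ℝ} (P : ℝ → Prop) (hab : a ≤ b) (ha : P a) (hb : ¬ P b) :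
    ∃ t ∈ Set.Icc a b, ∃ t' ∈ Set.Icc a b, dist t t' ≤ 1 ∧ P t ∧ ¬ P t' := by
  obtain ⟨t, ⟨ht, hPt⟩, hlast⟩ := exists_mem_forall_lt_add_one (A := {t | t ∈ Set.Icc a b ∧ P t})
    ⟨a, ⟨le_rfl, hab⟩, ha⟩ ⟨b, fun t ht => ht.1.2⟩
  have htt' : t ≤ min (t + 1) b := le_min (by linarith) ht.2
  refine ⟨t, ht, min (t + 1) b, ⟨ht.1.trans htt', min_le_right _ _⟩, ?_, hPt, fun hP => ?_⟩
  · rw [dist_eq_sub_of_le htt']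
    linarith [min_le_left (t + 1) b]
  · rcases le_total (t + 1) b with h | h
    · rw [min_eq_left h] at hP
      exact (hlast _ ⟨⟨ht.1.trans (by linarith), h⟩, hP⟩).false
    · exact hb (min_eq_right h ▸ hP)

/-- Coarse connectedness: each point of `A` is straddled by the coarse projections to `A` of two
adjacent points of `S`. -/
theorem Near.of_quasiGeodesic {A : Set X} (h : Near D S A) (hS : IsQuasiGeodesic Q x y S)
    (hA : IsQuasiGeodesic Q x y A) (hQ : 1 ≤ Q) (hD : 0 ≤ D) :
    Near (D + Q * (Q * (2 * D + 2 * Q) + Q) + Q) A S := by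
  obtain ⟨a, b, p, -, hp, rfl, rfl, rfl⟩ := hA
  obtain ⟨c, d, q, hcd, hq, hqc, hqd, rfl⟩ := hS
  rintro _ ⟨r, hr, rfl⟩
  obtain ⟨t, ht, t', ht', u, hu, v, hv, htt', htu, htv⟩ :
      ∃ t ∈ Set.Icc c d, ∃ t' ∈ Set.Icc c d, ∃ u ∈ Set.Icc a r, ∃ v ∈ Set.Icc r b,
        dist t t' ≤ 1 ∧ dist (q t) (p u) ≤ D ∧ dist (q t') (p v) ≤ D := by
    by_cases hd : ∃ u ∈ Set.Icc a r, dist (q d) (p u) ≤ D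
    · obtain ⟨u, hu, hdu⟩ := hd
      exact ⟨d, ⟨hcd, le_rfl⟩, d, ⟨hcd, le_rfl⟩, u, hu, b, ⟨hr.2, le_rfl⟩, by simp, hdu,
        by rwa [hqd, dist_self]⟩
    · obtain ⟨t, ht, t', ht', htt', ⟨u, hu, htu⟩, hnot⟩ :=
        exists_adjacent_of_not (fun t => ∃ u ∈ Set.Icc a r, dist (q t) (p u) ≤ D) hcd
          ⟨a, ⟨le_rfl, hr.1⟩, by rwa [hqc, dist_self]⟩ hd
      obtain ⟨_, ⟨v, hv, rfl⟩, htv⟩ := h (q t') ⟨t', ht', rfl⟩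
      have hrv : r ≤ v := le_of_not_ge fun hvr => hnot ⟨v, ⟨hv.1, hvr⟩, htv⟩
      exact ⟨t, ht, t', ht', u, hu, v, ⟨hrv, hv.2⟩, htt', htu, htv⟩
  have hu' : u ∈ Set.Icc a b := ⟨hu.1, hu.2.trans hr.2⟩
  have hqq : dist (q t) (q t') ≤ Q * 1 + Q := (hq t ht t' ht').2.trans (by gcongr)
  have hpp : dist (p u) (p v) ≤ 2 * D + 2 * Q := by
    linarith [dist_triangle4 (p u) (q t) (q t') (p v), dist_comm (p u) (q t)]
  have hru : dist r u ≤ Q * (2 * D + 2 * Q) + Q := calc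
    dist r u ≤ dist u v := by
      rw [dist_comm, dist_eq_sub_of_le hu.2, dist_eq_sub_of_le (hu.2.trans hv.1)]
      linarith [hv.1]
    _ ≤ Q * dist (p u) (p v) + Q := (hp u hu' v ⟨hr.1.trans hv.1, hv.2⟩).1
    _ ≤ Q * (2 * D + 2 * Q) + Q := by gcongr
  have hpru : dist (p r) (p u) ≤ Q * (Q * (2 * D + 2 * Q) + Q) + Q :=
    (hp r hr u hu').2.trans (by gcongr)
  exact ⟨q t, ⟨t, ht, rfl⟩, by linarith [dist_triangle_right (p r) (q t) (p u)]⟩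

end QuasiGeodesics

section MorsePairs

variable {X : Type*} [MetricSpace X] {N N' : ℝ → ℝ} {K k : ℝ} {u v x y a b p : X}
  {S α β A B : Set X}

/-- The pair `(u, v)` is Morse with gauge `N`: any two `Q`-quasi-geodesics from `u` to `v` are
`N Q`-close. Unlike `MorseOn` this does not single out a geodesic from `u` to `v`, so it transfers
through quasi-isometries. -/
def MorsePair (N : ℝ → ℝ) (u v : X) : Prop :=
  ∀ Q, 1 ≤ Q → ∀ S S' : Set X, IsQuasiGeodesic Q u v S → IsQuasiGeodesic Q u v S' → Near (N Q) S S'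

/-- All pairs of points of `S` are Morse, with the same gauge `N`. -/
def MorseSet (N : ℝ → ℝ) (S : Set X) : Prop := ∀ u ∈ S, ∀ v ∈ S, MorsePair N u v

namespace MorsePair

theorem mono (h : MorsePair N u v) (hN : ∀ Q, N Q ≤ N' Q) : MorsePair N' u v :=
  fun Q hQ S S' hS hS' => (h Q hQ S S' hS hS').mono (hN Q)

theorem symm (h : MorsePair N u v) : MorsePair N v u :=
  fun Q hQ S S' hS hS' => h Q hQ S S' hS.symm hS'.symm

theorem gauge_nonneg (hX : IsGeodesicSpace X) (h : MorsePair N u v) {Q : ℝ} (hQ : 1 ≤ Q) :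
    0 ≤ N Q := by
  obtain ⟨S, hS⟩ := hX.exists_isGeodesic u v
  have hS' := hS.isQuasiGeodesic hQ
  obtain ⟨_, -, hd⟩ := h Q hQ S S hS' hS' u hS.left_mem
  exact dist_nonneg.trans hd

theorem of_dist_le (h : dist u v ≤ k) : MorsePair (fun Q => Q * (Q * k + Q) + Q) u v := by
  intro Q hQ S S' hS hS' x hx
  refine ⟨u, hS'.left_mem, ?_⟩
  obtain ⟨a, b, q, hab, hq, rfl, rfl, rfl⟩ := hS
  obtain ⟨t, ht, rfl⟩ := hx
  have hlen : dist a b ≤ Q * k + Q := (hq a ⟨le_rfl, hab⟩ b ⟨hab, le_rfl⟩).1.trans (by gcongr)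
  calc dist (q t) (q a) ≤ Q * dist t a + Q := (hq t ht a ⟨le_rfl, hab⟩).2
    _ ≤ Q * (Q * k + Q) + Q := by
      gcongr
      rw [dist_comm, dist_eq_sub_of_le ht.1]
      rw [dist_eq_sub_of_le hab] at hlen
      linarith [ht.2]

theorem perturb (hX : IsGeodesicSpace X) {u' v' : X} (h : MorsePair N u v) (hk : 0 ≤ k)
    (hu : dist u' u ≤ k) (hv : dist v' v ≤ k) :
    MorsePair (fun Q => N (9 * Q * (2 * k + 1) ^ 2) + 2 * k) u' v' := by
  intro Q hQ S S' hS hS' x hx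
  rw [dist_comm] at hu hv
  obtain ⟨T, hST, hT, -⟩ := hS.exists_extend hX hQ hk hu hv
  obtain ⟨T', -, hT', hnear⟩ := hS'.exists_extend hX hQ hk hu hv
  have hk1 : 1 ≤ 2 * k + 1 := by linarith
  have hQ' : 1 ≤ 9 * Q * (2 * k + 1) ^ 2 := one_le_mul_of_one_le_of_one_le (by linarith)
    (one_le_pow₀ hk1)
  exact ((h _ hQ' T T' hT hT').trans hnear) x (hST hx)

theorem of_map {Y : Type*} [MetricSpace Y] {f : X → Y} {C : ℝ}
    (h : MorsePair N (f u) (f v)) (hf : QIEmbeddingOn C f Set.univ) (hC : 1 ≤ C) :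
    MorsePair (fun Q => C * N (2 * Q * C) + C) u v := by
  intro Q hQ S S' hS hS' x hx
  obtain ⟨_, ⟨y, hy, rfl⟩, hxy⟩ := h (2 * Q * C) (by nlinarith) _ _ (hS.map hf hQ hC)
    (hS'.map hf hQ hC) (f x) ⟨x, hx, rfl⟩
  exact ⟨y, hy, (hf x trivial y trivial).1.trans <| by dsimp only; gcongr⟩

theorem smul {G : Type*} [Group G] [MulAction G X] (hG : ∀ g : G, Isometry fun x : X => g • x)
    (g : G) (h : MorsePair N u v) : MorsePair N (g • u) (g • v) := by
  intro Q hQ S S' hS hS' x hx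
  have hpull := h Q hQ (g⁻¹ • S) (g⁻¹ • S') (by simpa using hS.smul hG g⁻¹)
    (by simpa using hS'.smul hG g⁻¹)
  obtain ⟨y, hy, hxy⟩ := hpull (g⁻¹ • x) (Set.smul_mem_smul_set hx)
  refine ⟨g • y, Set.mem_inv_smul_set_iff.1 hy, ?_⟩
  rwa [← (hG g⁻¹).dist_eq, inv_smul_smul]

end MorsePair

theorem IsQuasiGeodesic.exists_tripod (hX : IsGeodesicSpace X) {Q : ℝ} (hQ : 1 ≤ Q)
    (hS : IsQuasiGeodesic Q u v S) (p : X) :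
    ∃ m ∈ S, ∃ S₁ S₂ E, S = S₁ ∪ S₂ ∧ IsGeodesic p m E ∧
      IsQuasiGeodesic (9 * Q) p u (E ∪ S₁) ∧ IsQuasiGeodesic (9 * Q) p v (E ∪ S₂) := by
  obtain ⟨m, hm⟩ := exists_isCoarseProj ⟨u, hS.left_mem⟩ p
  obtain ⟨S₁, S₂, rfl, h₁, h₂⟩ := hS.split hm.1
  obtain ⟨E, hE⟩ := hX.exists_isGeodesic p m
  exact ⟨m, hm.1, S₁, S₂, E, rfl, hE,
    hm.isQuasiGeodesic_union hE h₁.symm Set.subset_union_left hQ,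
    hm.isQuasiGeodesic_union hE h₂ Set.subset_union_right hQ⟩

/-- The leg of the tripod from `p` to a quasi-geodesic from `u` to `v` is short, since its foot is
close to both `A` and `B`. -/
theorem MorsePair.trans_of_divergeAt (hX : IsGeodesicSpace X) (hup : MorsePair N u p)
    (hpv : MorsePair N p v) (hA : IsQuasiGeodesic 1 u p A) (hB : IsQuasiGeodesic 1 p v B)
    (hdiv : DivergeAt K p A B) (hK : 1 ≤ K) :
    MorsePair (fun Q => 2 * (K + 1) * N (9 * Q) + K) u v := by
  intro Q hQ S S' hS hS' x hx
  have hQ' : 1 ≤ 9 * Q := by linarith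
  have hN := hup.gauge_nonneg hX hQ'
  have hKN : 0 ≤ K * N (9 * Q) := by positivity
  have hleg : ∀ (m : X) (E T₁ T₂ : Set X), IsGeodesic p m E →
      IsQuasiGeodesic (9 * Q) p u (E ∪ T₁) → IsQuasiGeodesic (9 * Q) p v (E ∪ T₂) →
      ∀ e ∈ E, dist e m ≤ (2 * K + 1) * N (9 * Q) + K := by
    intro m E T₁ T₂ hE hu hv e he
    obtain ⟨a, ha, hma⟩ := hup.symm _ hQ' _ _ hu (hA.symm.mono hQ') m (Or.inl hE.right_mem)
    obtain ⟨b, hb, hmb⟩ := hpv _ hQ' _ _ hv (hB.mono hQ') m (Or.inl hE.right_mem)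
    have hab : K * dist a b ≤ K * (N (9 * Q) + N (9 * Q)) := by
      gcongr
      exact (dist_triangle_left a b m).trans (add_le_add hma hmb)
    linarith [hdiv a ha b hb, hE.dist_add_dist he, dist_triangle m a p, dist_comm m p,
      dist_nonneg (x := p) (y := b), dist_nonneg (x := p) (y := e)]
  obtain ⟨m, -, S₁, S₂, E, rfl, -, hu, hv⟩ := hS.exists_tripod hX hQ p
  obtain ⟨m', hm', S₁', S₂', E', rfl, hE', hu', hv'⟩ := hS'.exists_tripod hX hQ p
  have hleg' := hleg m' E' S₁' S₂' hE' hu' hv'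
  rcases hx with hx | hx
  · obtain ⟨y, hy | hy, hxy⟩ := hup.symm _ hQ' _ _ hu hu' x (Or.inr hx)
    · exact ⟨m', hm', by linarith [dist_triangle x y m', hleg' y hy]⟩
    · exact ⟨y, Or.inl hy, by linarith⟩
  · obtain ⟨y, hy | hy, hxy⟩ := hpv _ hQ' _ _ hv hv' x (Or.inr hx)
    · exact ⟨m', hm', by linarith [dist_triangle x y m', hleg' y hy]⟩
    · exact ⟨y, Or.inr hy, by linarith⟩

theorem gromovHyperbolic_of_morsePair (hX : IsGeodesicSpace X)
    (h : ∀ x y : X, MorsePair N x y) : GromovHyperbolic X := by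
  refine ⟨max (N 9) 0, le_max_right _ _, ?_⟩
  intro x y z γ₁ γ₂ γ₃ ℓ₁ ℓ₂ ℓ₃ h₁ h₂ h₃ s hs
  obtain ⟨m, -, A₁, A₂, E, hA, -, hzx, hzy⟩ :=
    (h₁.isGeodesic.isQuasiGeodesic le_rfl).exists_tripod hX le_rfl z
  rw [mul_one] at hzx hzy
  rcases (hA ▸ ⟨s, hs, rfl⟩ : γ₁ s ∈ A₁ ∪ A₂) with hm | hm
  · obtain ⟨w, hw, hd⟩ := h z x 9 (by norm_num) _ _ hzx
      (h₃.isGeodesic.isQuasiGeodesic (by norm_num)) _ (Or.inr hm)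
    exact ⟨w, Or.inr hw, hd.trans (le_max_left _ _)⟩
  · obtain ⟨w, hw, hd⟩ := h z y 9 (by norm_num) _ _ hzy
      (h₂.isGeodesic.isQuasiGeodesic (by norm_num)).symm _ (Or.inr hm)
    exact ⟨w, Or.inl hw, hd.trans (le_max_left _ _)⟩

namespace MorseSet

theorem mono (h : MorseSet N S) (hN : ∀ Q, N Q ≤ N' Q) : MorseSet N' S :=
  fun u hu v hv => (h u hu v hv).mono hN

theorem subset (h : MorseSet N S) {T : Set X} (hT : T ⊆ S) : MorseSet N T :=
  fun u hu v hv => h u (hT hu) v (hT hv)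

theorem of_near (hX : IsGeodesicSpace X) (h : MorseSet N S) (hk : 0 ≤ k) (hB : Near k B S) :
    MorseSet (fun Q => N (9 * Q * (2 * k + 1) ^ 2) + 2 * k) B := by
  intro u hu v hv
  obtain ⟨u', hu', huu'⟩ := hB u hu
  obtain ⟨v', hv', hvv'⟩ := hB v hv
  exact (h u' hu' v' hv').perturb hX hk huu' hvv'

theorem union_of_divergeAt (hX : IsGeodesicSpace X) (hA : MorseSet N A) (hB : MorseSet N B)
    (hxp : IsQuasiGeodesic 1 x p A) (hpy : IsQuasiGeodesic 1 p y B) (hdiv : DivergeAt K p A B)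
    (hK : 1 ≤ K) : MorseSet (fun Q => max (N Q) (2 * (K + 1) * N (9 * Q) + K)) (A ∪ B) := by
  have hmixed : ∀ u ∈ A, ∀ v ∈ B, MorsePair (fun Q => 2 * (K + 1) * N (9 * Q) + K) u v := by
    intro u hu v hv
    obtain ⟨A', hA', hup⟩ := hxp.exists_subpath hu hxp.right_mem
    obtain ⟨B', hB', hpv⟩ := hpy.exists_subpath hpy.left_mem hv
    exact (hA u hu p hxp.right_mem).trans_of_divergeAt hX (hB p hpy.left_mem v hv) hup hpv
      (hdiv.mono hA' hB') hK
  rintro u (hu | hu) v (hv | hv)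
  · exact (hA u hu v hv).mono fun Q => le_max_left _ _
  · exact (hmixed u hu v hv).mono fun Q => le_max_right _ _
  · exact (hmixed v hv u hu).symm.mono fun Q => le_max_right _ _
  · exact (hB u hu v hv).mono fun Q => le_max_left _ _

end MorseSet

theorem IsCoarseProj.divergeAt_of_far {E : Set X} {p' : X} (hα : IsGeodesic x a α)
    (hp : IsCoarseProj α y p) (hp' : IsCoarseProj α b p') (hB : IsGeodesic y p B)
    (hE : IsGeodesic b p' E) (hfar : 6 * (dist x y + dist a b + 1) ≤ dist x a) :
    DivergeAt 3 p' B E := by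
  intro u hu v hv
  have hyp := hp.2 x hα.left_mem
  have hbp' := hp'.2 a hα.right_mem
  have huB := hB.dist_add_dist hu
  have hvE := hE.dist_add_dist hv
  have hxp := dist_triangle x y p
  have hp'a := dist_triangle_left p' a b
  have hxa := dist_triangle4 x p p' a
  have hpp' := dist_triangle4 p u v p'
  have hup' := dist_triangle u p p'
  rw [dist_comm y x] at hyp
  rw [dist_comm b a] at hbp' hp'a
  rw [dist_comm p u] at hpp'
  rw [dist_comm p' v]
  linarith [dist_nonneg (x := y) (y := u), dist_nonneg (x := b) (y := v),
    dist_nonneg (x := x) (y := y), dist_nonneg (x := a) (y := b)]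

/-- The geodesic `B` is an initial part of a quasi-geodesic from `y` to `b` running along `α`. -/
theorem IsCoarseProj.near_of_morsePair (hX : IsGeodesicSpace X) (hα : IsGeodesic x a α)
    (hβ : IsGeodesic y b β) (hyb : MorsePair N y b) (hp : IsCoarseProj α y p)
    (hB : IsGeodesic y p B) (hfar : 6 * (dist x y + dist a b + 1) ≤ dist x a) :
    Near (N 81) B β := by
  obtain ⟨p', hp'⟩ := exists_isCoarseProj ⟨x, hα.left_mem⟩ b
  obtain ⟨E, hE⟩ := hX.exists_isGeodesic b p'
  obtain ⟨α₁, hα₁, hpp'⟩ := (hα.isQuasiGeodesic le_rfl).exists_subpath hp.1 hp'.1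
  have hyp' : IsQuasiGeodesic (9 * 1) y p' (B ∪ α₁) := hp.isQuasiGeodesic_union hB hpp' hα₁ le_rfl
  have hdiv : DivergeAt 3 p' (B ∪ α₁) E := by
    rintro u (hu | hu)
    · exact hp.divergeAt_of_far hα hp' hB hE hfar u hu
    · exact (hp'.divergeAt hE).symm u (hα₁ hu)
  have hdetour := hyp'.concat (hE.isQuasiGeodesic (by norm_num)).symm hdiv (by norm_num)
    (by norm_num)
  norm_num only at hdetour
  exact fun u hu => hyb 81 (by norm_num) _ _ hdetour (hβ.isQuasiGeodesic (by norm_num)) u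
    (Or.inl (Or.inl hu))

theorem exists_morseSet_joining (hX : IsGeodesicSpace X) (N : ℝ → ℝ) :
    ∃ N' : ℝ → ℝ, ∀ (x a y b : X) (α β : Set X), IsGeodesic x a α → IsGeodesic y b β →
      MorseSet N α → MorseSet N β → 6 * (dist x y + dist a b + 1) ≤ dist x a →
      ∃ P, IsQuasiGeodesic 9 x y P ∧ MorseSet N' P := by
  let k := N 81
  let N₁ : ℝ → ℝ := fun Q => max (N Q) (N (9 * Q * (2 * k + 1) ^ 2) + 2 * k)
  refine ⟨fun Q => max (N₁ Q) (2 * (3 + 1) * N₁ (9 * Q) + 3), ?_⟩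
  intro x a y b α β hα hβ hαN hβN hfar
  have hyb : MorsePair N y b := hβN y hβ.left_mem b hβ.right_mem
  have hk : 0 ≤ k := hyb.gauge_nonneg hX (by norm_num)
  obtain ⟨p, hp⟩ := exists_isCoarseProj ⟨x, hα.left_mem⟩ y
  obtain ⟨B, hB⟩ := hX.exists_isGeodesic y p
  have hBN : MorseSet N₁ B :=
    (hβN.of_near hX hk (hp.near_of_morsePair hX hα hβ hyb hB hfar)).mono fun Q => le_max_right _ _
  obtain ⟨α₀, hα₀, hxp⟩ := (hα.isQuasiGeodesic le_rfl).exists_subpath hα.left_mem hp.1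
  have hα₀N : MorseSet N₁ α₀ := (hαN.subset hα₀).mono fun Q => le_max_left _ _
  have hdiv : DivergeAt 3 p α₀ B := ((hp.divergeAt hB).mono subset_rfl hα₀).symm
  refine ⟨α₀ ∪ B, ?_, hα₀N.union_of_divergeAt hX hBN hxp (hB.isQuasiGeodesic le_rfl).symm hdiv
    (by norm_num)⟩
  convert hxp.concat (hB.isQuasiGeodesic le_rfl).symm hdiv le_rfl (by norm_num) using 1
  norm_num

end MorsePairs

theorem dist_le_mul_of_forall_dist_le {α : Type*} [PseudoMetricSpace α] {f : ℝ → α}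
    {a b c h : ℝ} (hc : 0 ≤ c) (hh : 0 < h) (hab : a ≤ b)
    (hf : ∀ s ∈ Set.Icc a b, ∀ t ∈ Set.Icc a b, dist s t ≤ h → dist (f s) (f t) ≤ c) :
    dist (f a) (f b) ≤ c * ((b - a) / h + 1) := by
  let n := ⌈(b - a) / h⌉₊
  let u : ℕ → ℝ := fun k => min (a + k * h) b
  have hu : ∀ k, u k ∈ Set.Icc a b := fun k =>
    ⟨le_min (le_add_of_nonneg_right (by positivity)) hab, min_le_right _ _⟩
  have hstep : ∀ k, dist (u k) (u (k + 1)) ≤ h := fun k => by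
    rw [Real.dist_eq]
    refine (abs_min_sub_min_le_max _ _ _ _).trans (max_le ?_ (by simpa using hh.le))
    rw [show a + k * h - (a + (k + 1 : ℕ) * h) = -h by push_cast; ring, abs_neg, abs_of_pos hh]
  have hu0 : u 0 = a := by simpa [u] using hab
  have hun : u n = b := min_eq_right <| by
    linarith [(div_le_iff₀ hh).1 (Nat.le_ceil ((b - a) / h))]
  calc dist (f a) (f b) = dist (f (u 0)) (f (u n)) := by rw [hu0, hun]
    _ ≤ ∑ _ ∈ Finset.range n, c :=
      dist_le_range_sum_of_dist_le (f := f ∘ u) n fun {k} _ => hf _ (hu k) _ (hu _) (hstep k)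
    _ = c * n := by rw [Finset.sum_const, Finset.card_range, nsmul_eq_mul, mul_comm]
    _ ≤ c * ((b - a) / h + 1) := by
      gcongr
      exact (Nat.ceil_lt_add_one (div_nonneg (sub_nonneg.2 hab) hh.le)).le

theorem uIcc_max_min_subset {u v x y : ℝ} (h : max u (min v x) ≠ max u (min v y)) :
    Set.uIcc (max u (min v x)) (max u (min v y)) ⊆ Set.uIcc x y := by
  wlog hxy : x ≤ y generalizing x y
  · rw [Set.uIcc_comm, Set.uIcc_comm x]
    exact this h.symm (not_le.1 hxy).le
  have hle : max u (min v x) ≤ max u (min v y) := by gcongr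
  have hlt := hle.lt_of_ne h
  rw [Set.uIcc_of_le hle, Set.uIcc_of_le hxy]
  have hxv : x ≤ v := by
    by_contra! hvx
    rw [min_eq_left hvx.le, min_eq_left (hvx.le.trans hxy)] at h
    exact h rfl
  have huy : u < min v y := (lt_max_iff.1 ((le_max_left u _).trans_lt hlt)).resolve_left
    (lt_irrefl u)
  refine Set.Icc_subset_Icc ?_ ?_
  · rw [min_eq_right hxv]
    exact le_max_right u x
  · rw [max_eq_right huy.le]
    exact min_le_right v y

theorem IsGeodesic.smul {G X : Type*} [Group G] [MetricSpace X] [MulAction G X]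
    (hG : ∀ g : G, Isometry fun x : X => g • x) (g : G) {x y : X} {S : Set X}
    (h : IsGeodesic x y S) : IsGeodesic (g • x) (g • y) (g • S) := by
  obtain ⟨γ, ℓ, ⟨hℓ, rfl, rfl, hγ⟩, rfl⟩ := h
  refine ⟨fun t => g • γ t, ℓ, ⟨hℓ, rfl, rfl, fun s hs t ht => ?_⟩, ?_⟩
  · rw [(hG g).dist_eq, hγ s hs t ht]
  · rw [← Set.image_smul, Set.image_image]

section BoundedImage

variable {Y : Type*} [MetricSpace Y] {c Q : ℝ} {I : Set ℝ} {lam : ℝ → Y} {π : Y → ℝ} {x y : Y}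

/-- The unit speed path `lam`, defined on `I`, has bounded geodesic image with respect to the
coarse projection `π` onto its domain: geodesics between points with distant projections come
`c`-close to all points of `lam` between the projections. -/
structure BoundedImage (c : ℝ) (I : Set ℝ) (lam : ℝ → Y) (π : Y → ℝ) : Prop where
  dist_eq : ∀ s ∈ I, ∀ t ∈ I, dist (lam s) (lam t) = dist s t
  proj_mem : ∀ x, π x ∈ I
  dist_proj_le : ∀ t ∈ I, dist (π (lam t)) t ≤ c
  exists_dist_le : ∀ x y S, IsGeodesic x y S → c < dist (π x) (π y) →
    ∀ t ∈ Set.uIcc (π x) (π y), ∃ m ∈ S, dist m (lam t) ≤ c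

/-- While a `Q`-quasi-geodesic stays at least this far from a path with bounded geodesic image, its
projection moves by at most `c` during time `2 * c * Q + 1`. -/
noncomputable def escapeRadius (c Q : ℝ) : ℝ := Q * (2 * c * Q + 1) + Q + c

/-- A bound on the time a `Q`-quasi-geodesic can spend outside the `escapeRadius`-neighbourhood of
a path with bounded geodesic image. -/
noncomputable def excursionLength (c Q : ℝ) : ℝ :=
  2 * (Q * (2 * escapeRadius c Q + 4 * Q + 5 * c) + Q)

/-- `Q`-quasi-geodesics between points of a path with bounded geodesic image stay this close
to it. -/
noncomputable def trackingRadius (c Q : ℝ) : ℝ :=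
  Q * excursionLength c Q + Q + escapeRadius c Q

/-- The Morse gauge of a path with bounded geodesic image. -/
noncomputable def boundedImageGauge (c Q : ℝ) : ℝ :=
  trackingRadius c Q + (trackingRadius c Q + Q * (Q * (2 * trackingRadius c Q + 2 * Q) + Q) + Q)

namespace BoundedImage

theorem nonneg (h : BoundedImage c I lam π) : 0 ≤ c :=
  dist_nonneg.trans (h.dist_proj_le _ (h.proj_mem (lam 0)))

theorem restrict (h : BoundedImage c I lam π) {u v : ℝ} (huv : u ≤ v) (hI : Set.Icc u v ⊆ I) :
    BoundedImage c (Set.Icc u v) lam (fun x => max u (min v (π x))) := by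
  have hlip : ∀ s t : ℝ, dist (max u (min v s)) (max u (min v t)) ≤ dist s t := fun s t => by
    simp only [Real.dist_eq]
    exact (abs_max_sub_max_le_max u (min v s) u (min v t)).trans
      (max_le (by simp) ((abs_min_sub_min_le_max v s v t).trans (max_le (by simp) le_rfl)))
  refine ⟨fun s hs t ht => h.dist_eq s (hI hs) t (hI ht),
    fun x => ⟨le_max_left _ _, max_le huv (min_le_left _ _)⟩, fun t ht => ?_,
    fun x y S hS hc t ht => ?_⟩
  · calc dist (max u (min v (π (lam t)))) t
        = dist (max u (min v (π (lam t)))) (max u (min v t)) := by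
          rw [min_eq_right ht.2, max_eq_right ht.1]
      _ ≤ dist (π (lam t)) t := hlip _ _
      _ ≤ c := h.dist_proj_le t (hI ht)
  · exact h.exists_dist_le x y S hS (hc.trans_le (hlip _ _)) t
      (uIcc_max_min_subset (dist_pos.1 (h.nonneg.trans_lt hc)) ht)

theorem reverse {ℓ : ℝ} (h : BoundedImage c (Set.Icc 0 ℓ) lam π) :
    BoundedImage c (Set.Icc 0 ℓ) (fun t => lam (ℓ - t)) (fun x => ℓ - π x) := by
  have hmem : ∀ {t}, t ∈ Set.Icc 0 ℓ → ℓ - t ∈ Set.Icc 0 ℓ := fun ht =>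
    ⟨sub_nonneg.2 ht.2, sub_le_self ℓ ht.1⟩
  refine ⟨fun s hs t ht => ?_, fun x => hmem (h.proj_mem x), fun t ht => ?_,
    fun x y S hS hc t ht => ?_⟩
  · rw [h.dist_eq _ (hmem hs) _ (hmem ht), dist_sub_left]
  · rw [← dist_sub_left ℓ, sub_sub_cancel]
    exact h.dist_proj_le _ (hmem ht)
  · rw [dist_sub_left] at hc
    refine h.exists_dist_le x y S hS hc _ ?_
    rw [Set.mem_uIcc] at ht ⊢
    grind

theorem smul {G : Type*} [Group G] [MulAction G Y] (hG : ∀ g : G, Isometry fun x : Y => g • x)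
    (g : G) (h : BoundedImage c I lam π) :
    BoundedImage c I (fun t => g • lam t) (fun x => π (g⁻¹ • x)) where
  dist_eq s hs t ht := by rw [(hG g).dist_eq, h.dist_eq s hs t ht]
  proj_mem x := h.proj_mem _
  dist_proj_le t ht := by simpa only [inv_smul_smul] using h.dist_proj_le t ht
  exists_dist_le x y S hS hc t ht := by
    obtain ⟨m, hm, hmt⟩ := h.exists_dist_le _ _ _ (hS.smul hG g⁻¹) hc t ht
    exact ⟨g • m, Set.mem_inv_smul_set_iff.1 hm, by rwa [(hG g).dist_eq]⟩

theorem dist_proj_proj_le (hY : IsGeodesicSpace Y) (h : BoundedImage c I lam π) (x y : Y) :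
    dist (π x) (π y) ≤ dist x y + 2 * c := by
  rcases le_or_gt (dist (π x) (π y)) c with hc | hc
  · linarith [h.nonneg, dist_nonneg (x := x) (y := y)]
  obtain ⟨S, hS⟩ := hY.exists_isGeodesic x y
  obtain ⟨m, hm, hmx⟩ := h.exists_dist_le x y S hS hc _ Set.left_mem_uIcc
  obtain ⟨n, hn, hny⟩ := h.exists_dist_le x y S hS hc _ Set.right_mem_uIcc
  have hmn : dist m n ≤ dist x y := by
    obtain ⟨γ, ℓ, ⟨hℓ, rfl, rfl, hγ⟩, rfl⟩ := hS
    obtain ⟨s, hs, rfl⟩ := hm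
    obtain ⟨t, ht, rfl⟩ := hn
    rw [hγ s hs t ht, hγ 0 ⟨le_rfl, hℓ⟩ ℓ ⟨hℓ, le_rfl⟩, sub_zero, abs_of_nonneg hℓ]
    exact abs_le.2 ⟨by linarith [hs.2, ht.1], by linarith [hs.1, ht.2]⟩
  rw [← h.dist_eq _ (h.proj_mem x) _ (h.proj_mem y)]
  rw [dist_comm] at hmx
  linarith [dist_triangle4 (lam (π x)) m n (lam (π y))]

theorem dist_proj_proj_le_of_far (hY : IsGeodesicSpace Y) (h : BoundedImage c I lam π)
    (hxy : dist x y + c < dist x (lam (π x))) : dist (π x) (π y) ≤ c := by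
  by_contra! hc
  obtain ⟨S, hS⟩ := hY.exists_isGeodesic x y
  obtain ⟨m, hm, hmx⟩ := h.exists_dist_le x y S hS hc _ Set.left_mem_uIcc
  linarith [hS.dist_add_dist hm, dist_triangle x m (lam (π x)), dist_nonneg (x := m) (y := y)]

theorem dist_proj_le_of_far (hY : IsGeodesicSpace Y) (h : BoundedImage c I lam π) (hQ : 1 ≤ Q)
    {q : ℝ → Y} {a b : ℝ} (hab : a ≤ b) (hq : QIEmbeddingOn Q q (Set.Icc a b))
    (hfar : ∀ s ∈ Set.Icc a b, escapeRadius c Q < dist (q s) (lam (π (q s)))) :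
    dist (π (q a)) (π (q b)) ≤ c * ((b - a) / (2 * c * Q + 1) + 1) := by
  have hc := h.nonneg
  refine dist_le_mul_of_forall_dist_le (f := fun s => π (q s)) hc (by positivity) hab
    fun s hs t ht hst => h.dist_proj_proj_le_of_far hY ?_
  calc dist (q s) (q t) + c ≤ Q * dist s t + Q + c := by gcongr; exact (hq s hs t ht).2
    _ ≤ escapeRadius c Q := by unfold escapeRadius; gcongr
    _ < dist (q s) (lam (π (q s))) := hfar s hs

theorem dist_proj_le_of_excursion (hY : IsGeodesicSpace Y) (h : BoundedImage c I lam π)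
    (hQ : 1 ≤ Q) {q : ℝ → Y} {a b : ℝ} (hab : a + 1 ≤ b - 1)
    (hq : QIEmbeddingOn Q q (Set.Icc a b))
    (hfar : ∀ s ∈ Set.Icc (a + 1) (b - 1), escapeRadius c Q < dist (q s) (lam (π (q s)))) :
    dist (π (q a)) (π (q b)) ≤ 4 * Q + 5 * c + c * ((b - 1 - (a + 1)) / (2 * c * Q + 1)) := by
  have ha : a + 1 ∈ Set.Icc a b := ⟨by linarith, by linarith⟩
  have hb : b - 1 ∈ Set.Icc a b := ⟨by linarith, by linarith⟩
  have hdrift := h.dist_proj_le_of_far hY hQ hab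
    (hq.mono_set (Set.Icc_subset_Icc ha.1 hb.2)) hfar
  have hstart := (hq a ⟨le_rfl, by linarith⟩ _ ha).2
  have hend := (hq _ hb b ⟨by linarith, le_rfl⟩).2
  rw [dist_eq_sub_of_le ha.1] at hstart
  rw [dist_eq_sub_of_le hb.2] at hend
  linarith [dist_triangle4 (π (q a)) (π (q (a + 1))) (π (q (b - 1))) (π (q b)),
    h.dist_proj_proj_le hY (q a) (q (a + 1)), h.dist_proj_proj_le hY (q (b - 1)) (q b)]

/-- During the excursion the projection is slow compared with the quasi-geodesic, which has to
travel the distance between the two projections. -/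
theorem excursion_le (hY : IsGeodesicSpace Y) (h : BoundedImage c I lam π) (hQ : 1 ≤ Q)
    {q : ℝ → Y} {a b : ℝ} (hab : a ≤ b) (hq : QIEmbeddingOn Q q (Set.Icc a b))
    (ha : dist (q a) (lam (π (q a))) ≤ escapeRadius c Q)
    (hb : dist (q b) (lam (π (q b))) ≤ escapeRadius c Q)
    (hfar : ∀ s ∈ Set.Icc (a + 1) (b - 1), escapeRadius c Q < dist (q s) (lam (π (q s)))) :
    b - a ≤ excursionLength c Q := by
  have hc := h.nonneg
  have hcQ : 0 ≤ c * Q := by positivity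
  have hr : 0 ≤ escapeRadius c Q := dist_nonneg.trans ha
  rcases lt_or_ge (b - 1) (a + 1) with hlt | hle
  · calc b - a ≤ 2 * (Q * 0 + 1) := by linarith
      _ ≤ excursionLength c Q := by unfold excursionLength; gcongr; positivity
  have hends : dist (q a) (q b) ≤ 2 * escapeRadius c Q + dist (π (q a)) (π (q b)) := by
    rw [← h.dist_eq _ (h.proj_mem _) _ (h.proj_mem _)]
    rw [dist_comm] at hb
    linarith [dist_triangle4 (q a) (lam (π (q a))) (lam (π (q b))) (q b)]
  have hslow : Q * (c * ((b - 1 - (a + 1)) / (2 * c * Q + 1))) ≤ (b - a) / 2 := by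
    rw [← mul_div_assoc, ← mul_div_assoc, div_le_iff₀ (by positivity)]
    nlinarith
  have hlong : b - a ≤ Q * (2 * escapeRadius c Q +
      (4 * Q + 5 * c + c * ((b - 1 - (a + 1)) / (2 * c * Q + 1)))) + Q := by
    rw [← dist_eq_sub_of_le hab]
    refine (hq a ⟨le_rfl, hab⟩ b ⟨hab, le_rfl⟩).1.trans ?_
    gcongr
    linarith [h.dist_proj_le_of_excursion hY hQ hle hq hfar]
  unfold excursionLength
  linarith

theorem near (hY : IsGeodesicSpace Y) (h : BoundedImage c I lam π) (hQ : 1 ≤ Q) {u v : ℝ}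
    (hu : u ∈ I) (hv : v ∈ I) {S : Set Y} (hS : IsQuasiGeodesic Q (lam u) (lam v) S) :
    Near (trackingRadius c Q) S (lam '' I) := by
  obtain ⟨a, b, q, -, hq, hqa, hqb, rfl⟩ := hS
  have hc := h.nonneg
  let A : Set ℝ := {s | dist (q s) (lam (π (q s))) ≤ escapeRadius c Q}
  have hA : ∀ s, ∀ w ∈ I, q s = lam w → s ∈ A := by
    intro s w hw hqs
    change dist (q s) (lam (π (q s))) ≤ _
    rw [hqs, dist_comm, h.dist_eq _ (h.proj_mem _) w hw]
    refine (h.dist_proj_le w hw).trans ?_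
    unfold escapeRadius
    linarith [show 0 ≤ Q * (2 * c * Q + 1) by positivity]
  rintro _ ⟨t, ht, rfl⟩
  obtain ⟨t₁, ⟨ht₁, ht₁A⟩, hlast⟩ := exists_mem_forall_lt_add_one (A := Set.Icc a t ∩ A)
    ⟨a, ⟨le_rfl, ht.1⟩, hA a u hu hqa⟩ (bddAbove_Icc.mono Set.inter_subset_left)
  obtain ⟨r, ⟨hr, hrA⟩, hfirst⟩ := exists_mem_forall_lt_add_one (A := Neg.neg ⁻¹' (Set.Icc t b ∩ A))
    ⟨-b, by simpa using ⟨ht.2, hA b v hv hqb⟩⟩ ⟨-t, fun s hs => by linarith [hs.1.1]⟩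
  have ht₁' : t₁ ∈ Set.Icc a b := ⟨ht₁.1, ht₁.2.trans ht.2⟩
  have hlength : -r - t₁ ≤ excursionLength c Q := by
    refine h.excursion_le hY hQ (ht₁.2.trans hr.1) (hq.mono_set (Set.Icc_subset_Icc ht₁.1 hr.2))
      ht₁A hrA fun s hs => ?_
    by_contra! hsA
    rcases le_total s t with hst | hts
    · linarith [hs.1, hlast s ⟨⟨by linarith [ht₁.1, hs.1], hst⟩, hsA⟩]
    · have hmem : - -s ∈ Set.Icc t b ∩ A := by
        rw [neg_neg]
        exact ⟨⟨hts, by linarith [hs.2, hr.2]⟩, hsA⟩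
      linarith [hs.2, hfirst (-s) hmem]
  have hdist : dist (q t₁) (q t) ≤ Q * excursionLength c Q + Q := by
    refine (hq t₁ ht₁' t ht).2.trans ?_
    rw [dist_eq_sub_of_le ht₁.2]
    gcongr
    linarith [hr.1]
  refine ⟨_, ⟨π (q t₁), h.proj_mem _, rfl⟩, ?_⟩
  exact (dist_triangle_left _ _ (q t₁)).trans (add_le_add hdist ht₁A)

theorem morsePair (hY : IsGeodesicSpace Y) (h : BoundedImage c I lam π) (hI : I.OrdConnected)
    {u v : ℝ} (hu : u ∈ I) (hv : v ∈ I) : MorsePair (boundedImageGauge c) (lam u) (lam v) := by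
  wlog huv : u ≤ v generalizing u v
  · exact (this hv hu (not_le.1 huv).le).symm
  intro Q hQ S S' hS hS'
  have hr := h.restrict huv (hI.out hu hv)
  have hnear : ∀ {T}, IsQuasiGeodesic Q (lam u) (lam v) T →
      Near (trackingRadius c Q) T (lam '' Set.Icc u v) :=
    hr.near hY hQ ⟨le_rfl, huv⟩ ⟨huv, le_rfl⟩
  have hlam : IsQuasiGeodesic Q (lam u) (lam v) (lam '' Set.Icc u v) :=
    (isGeodesic_image_Icc huv fun s hs t ht => by
      rw [hr.dist_eq s hs t ht, dist_comm, Real.dist_eq]).isQuasiGeodesic hQ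
  have hD : 0 ≤ trackingRadius c Q := by
    obtain ⟨y, -, hy⟩ := hnear hlam _ hlam.left_mem
    exact dist_nonneg.trans hy
  exact (hnear hS).trans ((hnear hS').of_quasiGeodesic hS' hlam hQ hD)

theorem morseSet (hY : IsGeodesicSpace Y) (h : BoundedImage c I lam π) (hI : I.OrdConnected)
    {J : Set ℝ} (hJ : J ⊆ I) : MorseSet (boundedImageGauge c) (lam '' J) := by
  rintro _ ⟨u, hu, rfl⟩ _ ⟨v, hv, rfl⟩
  exact h.morsePair hY hI (hJ hu) (hJ hv)

end BoundedImage

end BoundedImage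

section Contracting

variable {Y : Type*} [MetricSpace Y] {C : ℝ} {I : Set ℝ} {lam : ℝ → Y} {π : Y → ℝ}
  {x y m : Y} {S : Set Y}

theorem IsGeodesic.symm (h : IsGeodesic x y S) : IsGeodesic y x S := by
  obtain ⟨γ, ℓ, ⟨hℓ, rfl, rfl, hγ⟩, rfl⟩ := h
  refine ⟨fun t => γ (ℓ - t), ℓ, ⟨hℓ, by simp only [sub_zero], by simp only [sub_self],
    fun s hs t ht => ?_⟩, ?_⟩
  · rw [hγ _ ⟨sub_nonneg.2 hs.2, sub_le_self ℓ hs.1⟩ _ ⟨sub_nonneg.2 ht.2, sub_le_self ℓ ht.1⟩,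
      abs_sub_comm]
    congr 1
    ring
  · rw [← Set.image_image γ (fun t => ℓ - t), Set.image_const_sub_Icc, sub_self, sub_zero]

theorem IsGeodesic.exists_split (h : IsGeodesic x y S) (hm : m ∈ S) :
    ∃ S₁ ⊆ S, ∃ S₂ ⊆ S, IsGeodesic x m S₁ ∧ IsGeodesic m y S₂ := by
  obtain ⟨γ, ℓ, ⟨-, rfl, rfl, hγ⟩, rfl⟩ := h
  obtain ⟨t, ht, rfl⟩ := hm
  have h₁ : Set.Icc 0 t ⊆ Set.Icc 0 ℓ := Set.Icc_subset_Icc_right ht.2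
  have h₂ : Set.Icc t ℓ ⊆ Set.Icc 0 ℓ := Set.Icc_subset_Icc_left ht.1
  exact ⟨_, Set.image_mono h₁, _, Set.image_mono h₂,
    isGeodesic_image_Icc ht.1 fun u hu v hv => hγ u (h₁ hu) v (h₁ hv),
    isGeodesic_image_Icc ht.2 fun u hu v hv => hγ u (h₂ hu) v (h₂ hv)⟩

/-- `π` is (the parameter of) a closest-point projection to the unit speed path `lam`, and the
projection of the open ball around `x` which just misses `lam` is `C`-close to that of `x`. -/
structure ContractingProj (C : ℝ) (I : Set ℝ) (lam : ℝ → Y) (π : Y → ℝ) : Prop where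
  nonneg : 0 ≤ C
  dist_eq : ∀ s ∈ I, ∀ t ∈ I, dist (lam s) (lam t) = dist s t
  proj_mem : ∀ x, π x ∈ I
  dist_proj_le : ∀ x, ∀ t ∈ I, dist x (lam (π x)) ≤ dist x (lam t)
  dist_proj_proj_le : ∀ x y, dist x y < dist x (lam (π x)) → dist (π x) (π y) ≤ C

namespace ContractingProj

theorem proj_apply (h : ContractingProj C I lam π) {t : ℝ} (ht : t ∈ I) : π (lam t) = t := by
  have h0 := h.dist_proj_le (lam t) t ht
  rw [dist_self, h.dist_eq t ht _ (h.proj_mem _), dist_comm] at h0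
  exact dist_le_zero.1 h0

theorem dist_proj_proj_le_two_mul (h : ContractingProj C I lam π) (x y : Y) :
    dist (π x) (π y) ≤ 2 * dist x y + 2 * dist x (lam (π x)) := by
  rw [← h.dist_eq _ (h.proj_mem x) _ (h.proj_mem y)]
  linarith [dist_triangle4 (lam (π x)) x y (lam (π y)), dist_comm (lam (π x)) x, dist_comm y x,
    h.dist_proj_le y _ (h.proj_mem x), dist_triangle y x (lam (π x))]

theorem dist_proj_proj_le_of_dist_le_one (h : ContractingProj C I lam π) (hxy : dist x y ≤ 1) :
    dist (π x) (π y) ≤ C + 4 := by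
  rcases lt_or_ge (dist x y) (dist x (lam (π x))) with hlt | hle
  · linarith [h.dist_proj_proj_le x y hlt]
  · linarith [h.dist_proj_proj_le_two_mul x y, h.nonneg]

theorem dist_proj_le_half_add (h : ContractingProj C I lam π) {η : ℝ → Y} {s t : ℝ} (hst : s ≤ t)
    (hη : ∀ u ∈ Set.Icc s t, ∀ v ∈ Set.Icc s t, dist (η u) (η v) = |v - u|)
    (hfar : ∀ u ∈ Set.Icc s t, 2 * C + 1 < dist (η u) (lam (π (η u)))) :
    dist (π (η s)) (π (η t)) ≤ (t - s) / 2 + C := by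
  have hC := h.nonneg
  have hhalf : C * ((t - s) / (2 * C + 1)) ≤ (t - s) / 2 := by
    rw [← mul_div_assoc, div_le_iff₀ (by positivity)]
    nlinarith
  calc dist (π (η s)) (π (η t)) ≤ C * ((t - s) / (2 * C + 1) + 1) :=
      dist_le_mul_of_forall_dist_le (f := fun u => π (η u)) hC (by positivity) hst
        fun u hu v hv huv => h.dist_proj_proj_le _ _ <| by
          rw [hη u hu v hv, ← Real.dist_eq, dist_comm]
          exact huv.trans_lt (hfar u hu)
    _ ≤ (t - s) / 2 + C := by linarith

/-- The balls around `η s` and `η t` which just miss `lam` cover all of the geodesic except for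
about the distance between the projections, and along the rest the projection moves slowly. -/
theorem dist_proj_le_of_far (h : ContractingProj C I lam π) {η : ℝ → Y} {s t : ℝ} (hst : s ≤ t)
    (hη : ∀ u ∈ Set.Icc s t, ∀ v ∈ Set.Icc s t, dist (η u) (η v) = |v - u|)
    (hfar : ∀ u ∈ Set.Icc s t, 2 * C + 1 < dist (η u) (lam (π (η u)))) :
    dist (π (η s)) (π (η t)) ≤ 6 * C + 2 := by
  have hC := h.nonneg
  have hs : s ∈ Set.Icc s t := ⟨le_rfl, hst⟩
  have ht : t ∈ Set.Icc s t := ⟨hst, le_rfl⟩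
  have hclose : ∀ u ∈ Set.Icc s t, ∀ v ∈ Set.Icc s t, |v - u| < dist (η u) (lam (π (η u))) →
      dist (π (η u)) (π (η v)) ≤ C := fun u hu v hv huv =>
    h.dist_proj_proj_le _ _ (by rwa [hη u hu v hv])
  let s' := min (s + dist (η s) (lam (π (η s))) - 1) t
  let t' := max (t - dist (η t) (lam (π (η t))) + 1) s
  have hs' : s' ∈ Set.Icc s t := ⟨le_min (by linarith [hfar s hs]) hst, min_le_right _ _⟩
  have ht' : t' ∈ Set.Icc s t := ⟨le_max_right _ _, max_le (by linarith [hfar t ht]) hst⟩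
  have hss' : dist (π (η s)) (π (η s')) ≤ C := hclose s hs s' hs' <| by
    rw [abs_of_nonneg (sub_nonneg.2 hs'.1)]
    linarith [min_le_left (s + dist (η s) (lam (π (η s))) - 1) t]
  have ht't : ∀ v ∈ Set.Icc t' t, dist (π (η v)) (π (η t)) ≤ C := fun v hv => by
    rw [dist_comm]
    refine hclose t ht v ⟨ht'.1.trans hv.1, hv.2⟩ ?_
    rw [abs_of_nonpos (sub_nonpos.2 hv.2)]
    linarith [le_max_left (t - dist (η t) (lam (π (η t))) + 1) s, hv.1]
  rcases le_or_gt t' s' with hle | hlt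
  · linarith [dist_triangle (π (η s)) (π (η s')) (π (η t)), ht't s' ⟨hle, hs'.2⟩]
  have hsub : Set.Icc s' t' ⊆ Set.Icc s t := Set.Icc_subset_Icc hs'.1 ht'.2
  have hslow : dist (π (η s')) (π (η t')) ≤ (t' - s') / 2 + C :=
    h.dist_proj_le_half_add hlt.le (fun u hu v hv => hη u (hsub hu) v (hsub hv))
      fun u hu => hfar u (hsub hu)
  have hs'_eq : s' = s + dist (η s) (lam (π (η s))) - 1 :=
    (min_choice _ _).resolve_right fun _ => by linarith [ht'.2]
  have ht'_eq : t' = t - dist (η t) (lam (π (η t))) + 1 :=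
    (max_choice _ _).resolve_right fun _ => by linarith [hs'.1]
  have hlen : t - s ≤ dist (η s) (lam (π (η s))) + dist (π (η s)) (π (η t)) +
      dist (η t) (lam (π (η t))) := by
    rw [← abs_of_nonneg (sub_nonneg.2 hst), ← hη s hs t ht,
      ← h.dist_eq _ (h.proj_mem _) _ (h.proj_mem _), dist_comm (η t)]
    exact dist_triangle4 _ _ _ _
  linarith [dist_triangle4 (π (η s)) (π (η s')) (π (η t')) (π (η t)),
    ht't t' ⟨le_rfl, ht'.2⟩]

theorem exists_mem_close (h : ContractingProj C I lam π) (hS : IsGeodesic x y S)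
    (hxy : 6 * C + 2 < dist (π x) (π y)) :
    ∃ m ∈ S, dist m (lam (π m)) ≤ 2 * C + 1 ∧ dist (π m) (π y) ≤ 10 * C + 6 := by
  obtain ⟨η, ℓ, ⟨hℓ, rfl, rfl, hη⟩, rfl⟩ := hS
  let A : Set ℝ := {u ∈ Set.Icc 0 ℓ | dist (η u) (lam (π (η u))) ≤ 2 * C + 1}
  have hA : A.Nonempty := by
    by_contra! hempty
    refine hxy.not_ge (h.dist_proj_le_of_far hℓ hη fun u hu => ?_)
    by_contra! hle
    exact Set.eq_empty_iff_forall_notMem.1 hempty u ⟨hu, hle⟩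
  obtain ⟨u, ⟨hu, hclose⟩, hlast⟩ := exists_mem_forall_lt_add_one hA
    (bddAbove_Icc.mono fun u hu => hu.1)
  refine ⟨η u, ⟨u, hu, rfl⟩, hclose, ?_⟩
  let v := min (u + 1) ℓ
  have huv : u ≤ v := le_min (by linarith) hu.2
  have hv : v ∈ Set.Icc 0 ℓ := ⟨hu.1.trans huv, min_le_right _ _⟩
  have hπuv : dist (π (η u)) (π (η v)) ≤ 4 * C + 4 := by
    have hd := h.dist_proj_proj_le_two_mul (η u) (η v)
    rw [hη u hu v hv, abs_of_nonneg (sub_nonneg.2 huv)] at hd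
    linarith [min_le_left (u + 1) ℓ]
  have hπvℓ : dist (π (η v)) (π (η ℓ)) ≤ 6 * C + 2 := by
    rcases le_or_gt ℓ (u + 1) with hle | hlt
    · rw [show v = ℓ from min_eq_right hle, dist_self]
      linarith [h.nonneg]
    · have hsub : Set.Icc v ℓ ⊆ Set.Icc 0 ℓ := Set.Icc_subset_Icc_left hv.1
      refine h.dist_proj_le_of_far hv.2 (fun a ha b hb => hη a (hsub ha) b (hsub hb))
        fun a ha => ?_
      by_contra! hle
      exact (hlast a ⟨hsub ha, hle⟩).not_ge ((min_eq_left hlt.le).symm.le.trans ha.1)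
  linarith [dist_triangle (π (η u)) (π (η v)) (π (η ℓ))]

theorem exists_dist_proj_le (h : ContractingProj C I lam π) (hS : IsGeodesic x y S) {t : ℝ}
    (ht : t ∈ Set.uIcc (π x) (π y)) : ∃ m ∈ S, dist (π m) t ≤ C + 4 := by
  wlog hxy : π x ≤ π y generalizing x y
  · exact this hS.symm (by rwa [Set.uIcc_comm]) (not_le.1 hxy).le
  rw [Set.uIcc_of_le hxy] at ht
  obtain ⟨η, ℓ, ⟨hℓ, rfl, rfl, hη⟩, rfl⟩ := hS
  by_cases hℓt : π (η ℓ) ≤ t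
  · refine ⟨_, ⟨ℓ, ⟨hℓ, le_rfl⟩, rfl⟩, ?_⟩
    rw [le_antisymm hℓt ht.2, dist_self]
    linarith [h.nonneg]
  obtain ⟨u, hu, v, hv, huv, hut, hvt⟩ := exists_adjacent_of_not (fun u => π (η u) ≤ t) hℓ ht.1 hℓt
  refine ⟨_, ⟨u, hu, rfl⟩, ?_⟩
  have hjump : dist (π (η u)) (π (η v)) ≤ C + 4 := h.dist_proj_proj_le_of_dist_le_one <| by
    rwa [hη u hu v hv, ← Real.dist_eq, dist_comm]
  rw [dist_eq_sub_of_le hut]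
  rw [dist_eq_sub_of_le (hut.trans (not_le.1 hvt).le)] at hjump
  linarith

theorem boundedImage (h : ContractingProj C I lam π) (hI : I.OrdConnected) :
    BoundedImage (13 * C + 11) I lam π := by
  have hC := h.nonneg
  refine ⟨h.dist_eq, h.proj_mem, fun t ht => ?_, fun x y S hS hxy t ht => ?_⟩
  · rw [h.proj_apply ht, dist_self]
    positivity
  obtain ⟨m, hm, hmt⟩ := h.exists_dist_proj_le hS ht
  have htI : t ∈ I := hI.uIcc_subset (h.proj_mem x) (h.proj_mem y) ht
  have hfinish : ∀ n, dist n (lam (π n)) ≤ 2 * C + 1 → dist (π n) (π m) ≤ 10 * C + 6 →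
      dist n (lam t) ≤ 13 * C + 11 := fun n hn hnm => by
    have hπn := h.dist_eq _ (h.proj_mem n) t htI
    linarith [dist_triangle n (lam (π n)) (lam t), dist_triangle (π n) (π m) t]
  obtain ⟨S₁, hS₁, S₂, hS₂, hxm, hmy⟩ := hS.exists_split hm
  rcases lt_or_ge (6 * C + 2) (dist (π x) (π m)) with hlt | hge
  · obtain ⟨n, hn, hclose, hnm⟩ := h.exists_mem_close hxm hlt
    exact ⟨n, hS₁ hn, hfinish n hclose hnm⟩
  · have hlt : 6 * C + 2 < dist (π y) (π m) := by
      linarith [dist_triangle_right (π x) (π y) (π m)]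
    obtain ⟨n, hn, hclose, hnm⟩ := h.exists_mem_close hmy.symm hlt
    exact ⟨n, hS₂ hn, hfinish n hclose hnm⟩

end ContractingProj

theorem dist_toNNReal_of_isometry {γ : ℝ≥0 → Y} (hγ : Isometry γ) {s t : ℝ} (hs : 0 ≤ s)
    (ht : 0 ≤ t) : dist (γ s.toNNReal) (γ t.toNNReal) = dist s t := by
  rw [hγ.dist_eq, NNReal.dist_eq, Real.coe_toNNReal s hs, Real.coe_toNNReal t ht, Real.dist_eq]

theorem exists_dist_eq_infDist_range {α : Type*} [PseudoMetricSpace α] [ProperSpace α] [Nonempty α]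
    {γ : α → Y} (hγ : Isometry γ) (x : Y) :
    ∃ t, dist x (γ t) = Metric.infDist x (Set.range γ) := by
  inhabit α
  have htendsto : Filter.Tendsto (fun t => dist x (γ t)) (Filter.cocompact α) Filter.atTop := by
    refine Filter.tendsto_atTop_mono (fun t => ?_) (Filter.tendsto_atTop_add_const_right _
      (-dist x (γ default)) (tendsto_dist_right_cocompact_atTop default))
    rw [← hγ.dist_eq]
    linarith [dist_triangle_left (γ t) (γ default) x]
  obtain ⟨t, ht⟩ := (continuous_const.dist hγ.continuous).exists_forall_le htendsto
  refine ⟨t, le_antisymm ?_ (Metric.infDist_le_dist_of_mem ⟨t, rfl⟩)⟩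
  rw [Metric.le_infDist (Set.range_nonempty γ)]
  rintro _ ⟨s, rfl⟩
  exact ht s

theorem IsStronglyContractingRay.exists_boundedImage {γ : ℝ≥0 → Y}
    (h : IsStronglyContractingRay γ) :
    ∃ (c : ℝ) (π : Y → ℝ), BoundedImage c (Set.Ici 0) (fun t => γ t.toNNReal) π := by
  obtain ⟨hγ, C, hC, hcontr⟩ := h
  choose π hπ using exists_dist_eq_infDist_range hγ
  refine ⟨_, fun x => π x, ContractingProj.boundedImage
    ⟨hC, fun s hs t ht => dist_toNNReal_of_isometry hγ hs ht, fun x => (π x).2, fun x t _ => ?_,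
      fun x y hxy => ?_⟩ Set.ordConnected_Ici⟩
  · rw [Real.toNNReal_coe, hπ]
    exact Metric.infDist_le_dist_of_mem ⟨_, rfl⟩
  · rw [Real.toNNReal_coe, hπ] at hxy
    rw [Real.dist_eq, ← NNReal.dist_eq, ← hγ.dist_eq]
    exact hcontr x x (Metric.mem_ball_self (dist_nonneg.trans_lt hxy)) y
      (by rwa [Metric.mem_ball, dist_comm]) _ ⟨_, rfl⟩ _ ⟨_, rfl⟩ (hπ x) (hπ y)

end Contracting

section Separation

variable {G Y : Type*} [Group G] [MetricSpace Y] [MulAction G Y] {c T R ℓ ℓ₁ ℓ₂ : ℝ}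
  {τ₁ τ₂ : ℝ → Y} {π₁ π₂ : Y → ℝ} {o₁ o₂ a₁ a₂ : Y} {S : Set Y}

theorem IsGeodesic.dist_eq_abs_sub {x y u v : Y} (h : IsGeodesic x y S) (hu : u ∈ S)
    (hv : v ∈ S) : dist u v = |dist x u - dist x v| := by
  obtain ⟨γ, ℓ, ⟨hℓ, rfl, rfl, hγ⟩, rfl⟩ := h
  obtain ⟨s, hs, rfl⟩ := hu
  obtain ⟨t, ht, rfl⟩ := hv
  have h0 : (0 : ℝ) ∈ Set.Icc 0 ℓ := ⟨le_rfl, hℓ⟩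
  rw [hγ s hs t ht, hγ 0 h0 s hs, hγ 0 h0 t ht, sub_zero, sub_zero, abs_of_nonneg hs.1,
    abs_of_nonneg ht.1, abs_sub_comm]

namespace BoundedImage

theorem dist_zero (h : BoundedImage c (Set.Icc 0 ℓ) τ₁ π₁) {t : ℝ} (ht : t ∈ Set.Icc 0 ℓ) :
    dist (τ₁ 0) (τ₁ t) = t := by
  rw [h.dist_eq 0 ⟨le_rfl, ht.1.trans ht.2⟩ t ht, dist_eq_sub_of_le ht.1, sub_zero]

theorem dist_le_add (h : BoundedImage c (Set.Icc 0 ℓ) τ₁ π₁) (ho : dist (τ₁ 0) o₁ ≤ R) {t : ℝ}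
    (ht : t ∈ Set.Icc 0 ℓ) {m : Y} (hm : dist m (τ₁ t) ≤ c) : dist m o₁ ≤ c + t + R := by
  linarith [dist_triangle4 m (τ₁ t) (τ₁ 0) o₁, h.dist_zero ht, dist_comm (τ₁ t) (τ₁ 0)]

theorem proj_zero_le (h : BoundedImage c (Set.Icc 0 ℓ) τ₁ π₁) : π₁ (τ₁ 0) ≤ c := by
  have hself := h.dist_proj_le 0
    ⟨le_rfl, (h.proj_mem (τ₁ 0)).1.trans (h.proj_mem (τ₁ 0)).2⟩
  rw [Real.dist_eq, sub_zero] at hself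
  exact (le_abs_self _).trans hself

theorem proj_le_dist_zero_add (hY : IsGeodesicSpace Y)
    (h : BoundedImage c (Set.Icc 0 ℓ) τ₁ π₁) (x : Y) : π₁ x ≤ dist (τ₁ 0) x + 3 * c := by
  have hlip := h.dist_proj_proj_le hY x (τ₁ 0)
  rw [dist_comm x, Real.dist_eq] at hlip
  linarith [h.proj_zero_le, le_abs_self (π₁ x - π₁ (τ₁ 0))]

theorem exists_dist_le_of_far_proj (hY : IsGeodesicSpace Y)
    (h₁ : BoundedImage c (Set.Icc 0 ℓ₁) τ₁ π₁) (h₂ : BoundedImage c (Set.Icc 0 ℓ₂) τ₂ π₂)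
    {d : ℝ} (hd : dist (τ₁ 0) (τ₂ 0) ≤ d) {z : Y} (hz₁ : 7 * d + 20 * c + 7 ≤ π₁ z)
    (hz₂ : 7 * d + 20 * c + 7 ≤ π₂ z) :
    ∃ u ∈ Set.Icc 0 ℓ₂, dist (τ₁ (6 * (d + 3 * c + 1))) (τ₂ u) ≤ 3 * c := by
  have hc := h₁.nonneg
  have hd0 : 0 ≤ d := dist_nonneg.trans hd
  have hℓ₁ := (h₁.proj_mem z).2
  have hℓ₂ := (h₂.proj_mem z).2
  set r := 6 * (d + 3 * c + 1)
  have hr_mem : r ∈ Set.Icc 0 ℓ₁ := ⟨by positivity, by linarith⟩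
  have hstart₁ := h₁.proj_le_dist_zero_add hY (τ₂ 0)
  have hstart₂ := h₂.proj_zero_le
  obtain ⟨S, hS⟩ := hY.exists_isGeodesic (τ₂ 0) z
  obtain ⟨m, hm, hmr⟩ := h₁.exists_dist_le _ _ _ hS
    (by rw [dist_eq_sub_of_le] <;> linarith) r (Set.mem_uIcc_of_le (by linarith) (by linarith))
  have hmfar : |dist (τ₂ 0) m - r| ≤ d + c := by
    rw [abs_le]
    constructor <;> linarith [h₁.dist_zero hr_mem, dist_triangle4 (τ₁ 0) (τ₂ 0) m (τ₁ r),
      dist_triangle4 (τ₂ 0) (τ₁ 0) (τ₁ r) m, dist_comm (τ₁ 0) (τ₂ 0), dist_comm m (τ₁ r)]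
  set u := dist (τ₂ 0) m
  have hu := abs_le.1 hmfar
  have hu_mem : u ∈ Set.Icc 0 ℓ₂ := ⟨dist_nonneg, by linarith⟩
  obtain ⟨n, hn, hnu⟩ := h₂.exists_dist_le _ _ _ hS
    (by rw [dist_eq_sub_of_le] <;> linarith) u (Set.mem_uIcc_of_le (by linarith) (by linarith))
  have hmn : dist m n ≤ c := by
    have hun := h₂.dist_zero hu_mem
    rw [hS.dist_eq_abs_sub hm hn, abs_le]
    constructor <;>
      linarith [dist_triangle (τ₂ 0) (τ₂ u) n, dist_triangle_right (τ₂ 0) (τ₂ u) n,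
        dist_comm n (τ₂ u)]
  refine ⟨u, hu_mem, ?_⟩
  rw [dist_comm] at hmr
  linarith [dist_triangle4 (τ₁ r) m n (τ₂ u)]

theorem exists_morsePair_of_far_proj (hY : IsGeodesicSpace Y) (c : ℝ) :
    ∃ N : ℝ → ℝ, ∀ (ℓ₁ ℓ₂ : ℝ) (τ₁ τ₂ : ℝ → Y) (π₁ π₂ : Y → ℝ),
      BoundedImage c (Set.Icc 0 ℓ₁) τ₁ π₁ → BoundedImage c (Set.Icc 0 ℓ₂) τ₂ π₂ →
      ∀ (d : ℝ) (z : Y), dist (τ₁ 0) (τ₂ 0) ≤ d → 7 * d + 20 * c + 7 ≤ π₁ z →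
        7 * d + 20 * c + 7 ≤ π₂ z → MorsePair N (τ₁ 0) (τ₂ 0) := by
  obtain ⟨N, hN⟩ := exists_morseSet_joining hY (boundedImageGauge c)
  refine ⟨N, fun ℓ₁ ℓ₂ τ₁ τ₂ π₁ π₂ h₁ h₂ d z hd hz₁ hz₂ => ?_⟩
  obtain ⟨u, hu, hru⟩ := h₁.exists_dist_le_of_far_proj hY h₂ hd hz₁ hz₂
  have hc := h₁.nonneg
  have hd0 : 0 ≤ d := dist_nonneg.trans hd
  have hr : 6 * (d + 3 * c + 1) ∈ Set.Icc 0 ℓ₁ :=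
    ⟨by positivity, by linarith [(h₁.proj_mem z).2]⟩
  have hinitial : ∀ {ℓ t : ℝ} {τ : ℝ → Y} {π : Y → ℝ}, BoundedImage c (Set.Icc 0 ℓ) τ π →
      t ∈ Set.Icc 0 ℓ → IsGeodesic (τ 0) (τ t) (τ '' Set.Icc 0 t) ∧
        MorseSet (boundedImageGauge c) (τ '' Set.Icc 0 t) := fun {ℓ t τ π} h ht => by
    have hsub : Set.Icc 0 t ⊆ Set.Icc 0 ℓ := Set.Icc_subset_Icc_right ht.2
    refine ⟨isGeodesic_image_Icc ht.1 fun u hu v hv => ?_, h.morseSet hY Set.ordConnected_Icc hsub⟩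
    rw [h.dist_eq u (hsub hu) v (hsub hv), dist_comm, Real.dist_eq]
  obtain ⟨P, hP, hPN⟩ := hN _ _ _ _ _ _ (hinitial h₁ hr).1 (hinitial h₂ hu).1 (hinitial h₁ hr).2
    (hinitial h₂ hu).2 (by rw [h₁.dist_zero hr]; linarith)
  exact hPN _ hP.left_mem _ hP.right_mem

/-- A geodesic from `a₂` to `o₂` would pass near `o₁`, and one from `a₂` to `o₁` near `o₂`. -/
theorem proj_le_of_proj_lt (hY : IsGeodesicSpace Y) (hT : T ∈ Set.Icc 0 ℓ)
    (h₁ : BoundedImage c (Set.Icc 0 ℓ) τ₁ π₁) (h₂ : BoundedImage c (Set.Icc 0 ℓ) τ₂ π₂)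
    (ho₁ : dist (τ₁ 0) o₁ ≤ R) (ho₂ : dist (τ₂ 0) o₂ ≤ R) (h12 : π₁ o₂ < T) (h21 : π₂ o₁ < T)
    (ha₂ : T + c < π₂ a₂) (hbig : 2 * (c + T + R) < dist o₁ o₂) : π₁ a₂ ≤ T + c := by
  by_contra! hfar
  have hc := h₁.nonneg
  obtain ⟨A, hA⟩ := hY.exists_isGeodesic a₂ o₂
  obtain ⟨B, hB⟩ := hY.exists_isGeodesic a₂ o₁
  obtain ⟨m, hm, hmT⟩ := h₁.exists_dist_le _ _ _ hA
    (by rw [dist_comm, dist_eq_sub_of_le] <;> linarith) T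
    (Set.mem_uIcc_of_ge h12.le (by linarith))
  obtain ⟨n, hn, hnT⟩ := h₂.exists_dist_le _ _ _ hB
    (by rw [dist_comm, dist_eq_sub_of_le] <;> linarith) T
    (Set.mem_uIcc_of_ge h21.le (by linarith))
  linarith [h₁.dist_le_add ho₁ hT hmT, h₂.dist_le_add ho₂ hT hnT, hA.dist_add_dist hm,
    hB.dist_add_dist hn, dist_triangle a₂ m o₁, dist_triangle_left o₁ o₂ m,
    dist_triangle a₂ n o₂, dist_triangle_left o₁ o₂ n]

theorem exists_mem_dist_le_of_proj (hY : IsGeodesicSpace Y) (hT : 0 ≤ T) (hℓ : 2 * T + 2 * c ≤ ℓ)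
    (h₁ : BoundedImage c (Set.Icc 0 ℓ) τ₁ π₁) (h₂ : BoundedImage c (Set.Icc 0 ℓ) τ₂ π₂)
    (ho₁ : dist (τ₁ 0) o₁ ≤ R) (ho₂ : dist (τ₂ 0) o₂ ≤ R) (h12 : π₁ o₂ < T) (h21 : π₂ o₁ < T)
    (ha₁ : ℓ - T < π₁ a₁) (ha₂ : ℓ - T < π₂ a₂) (hbig : 2 * (c + T + R) < dist o₁ o₂)
    (hS : IsGeodesic a₁ a₂ S) : ∃ m ∈ S, dist m o₁ ≤ 2 * c + T + R := by
  have hc := h₁.nonneg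
  have ha₂₁ : π₁ a₂ ≤ T + c := proj_le_of_proj_lt hY ⟨hT, by linarith⟩ h₁ h₂ ho₁ ho₂ h12 h21
    (by linarith) hbig
  obtain ⟨m, hm, hmT⟩ := h₁.exists_dist_le _ _ _ hS
    (by rw [dist_comm, dist_eq_sub_of_le] <;> linarith) (T + c)
    (Set.mem_uIcc_of_ge ha₂₁ (by linarith))
  exact ⟨m, hm, by linarith [h₁.dist_le_add ho₁ ⟨by linarith, by linarith⟩ hmT]⟩

end BoundedImage

theorem exists_finite_forall_proj_lt (hY : IsGeodesicSpace Y)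
    (hG : ∀ g : G, Isometry fun x : Y => g • x) (o : Y)
    (hne : ¬ ∃ N : ℝ → ℝ, ∀ p : G, MorsePair N o (p • o)) (hc : 0 ≤ c) (hR : 0 ≤ R) :
    ∃ (K : Set G) (T : ℝ), K.Finite ∧ 0 ≤ T ∧ ∀ (ℓ : ℝ) (τ : ℝ → Y) (π : Y → ℝ),
      BoundedImage c (Set.Icc 0 ℓ) τ π → dist (τ 0) o ≤ R → ∀ z, ∃ k ∈ K, π (k • z) < T := by
  by_contra! hcon
  obtain ⟨N, hN⟩ := BoundedImage.exists_morsePair_of_far_proj hY c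
  refine hne ⟨fun Q => N (9 * Q * (2 * R + 1) ^ 2) + 2 * R, fun p => ?_⟩
  let d := dist o (p • o) + 2 * R
  obtain ⟨ℓ, τ, π, h, hτ, z, hz⟩ := hcon {1, p⁻¹} (7 * d + 20 * c + 7) (Set.toFinite _)
    (by positivity)
  have hpτ : dist (p • τ 0) (p • o) ≤ R := by rwa [(hG p).dist_eq]
  rw [dist_comm] at hτ hpτ
  have hd : dist (τ 0) (p • τ 0) ≤ d := by
    linarith [dist_triangle4 (τ 0) o (p • o) (p • τ 0), dist_comm o (τ 0)]
  exact (hN _ _ _ _ _ _ h (h.smul hG p) d z hd (by simpa using hz 1 (by simp))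
    (hz p⁻¹ (by simp))).perturb hY hR hτ hpτ

theorem exists_finite_forall_exists_boundedImage (hY : IsGeodesicSpace Y)
    (hG : ∀ g : G, Isometry fun x : Y => g • x) {o : Y} (hR : ∀ x : Y, ∃ g : G, dist x (g • o) ≤ R)
    {γ : ℝ → Y} {π₀ : Y → ℝ} (hγ : BoundedImage c (Set.Ici 0) γ π₀)
    (hne : ¬ ∃ N : ℝ → ℝ, ∀ p : G, MorsePair N o (p • o)) :
    ∃ (E : Set G) (T ℓ R' : ℝ), E.Finite ∧ 0 ≤ T ∧ 2 * T + 2 * c ≤ ℓ ∧ 0 ≤ R' ∧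
      ∀ y z, ∃ e ∈ E, ∃ (τ : ℝ → Y) (π : Y → ℝ), BoundedImage c (Set.Icc 0 ℓ) τ π ∧
        dist (τ 0) o ≤ R' ∧ π z < T ∧ ℓ - T < π (e • y) := by
  have hc := hγ.nonneg
  obtain ⟨g, hg⟩ := hR (γ 0)
  have hR0 : 0 ≤ R := dist_nonneg.trans hg
  obtain ⟨K, T, hK, hT, hsep⟩ := exists_finite_forall_proj_lt hY hG o hne hc hR0
  let ℓ := 2 * T + 2 * c
  have hτ := (hγ.restrict (show 0 ≤ ℓ by positivity) Set.Icc_subset_Ici_self).smul hG g⁻¹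
  have hτ0 : dist (g⁻¹ • γ 0) o ≤ R := by rwa [← (hG g).dist_eq, smul_inv_smul]
  obtain ⟨s, hs⟩ := hR (g⁻¹ • γ ℓ)
  have hσ := hτ.reverse.smul hG s⁻¹
  have hσ0 : dist (s⁻¹ • g⁻¹ • γ (ℓ - 0)) o ≤ R := by
    rwa [sub_zero, ← (hG s).dist_eq, smul_inv_smul]
  obtain ⟨D, hD⟩ := (hK.image fun k => dist o (k • o)).bddAbove
  refine ⟨K⁻¹ * {s⁻¹} * K, T, ℓ, R + max D 0, (hK.inv.mul (Set.finite_singleton _)).mul hK, hT,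
    le_rfl, by positivity, fun y z => ?_⟩
  obtain ⟨k, hk, hky⟩ := hsep _ _ _ hτ hτ0 y
  obtain ⟨k', hk', hkz⟩ := hsep _ _ _ hσ hσ0 z
  refine ⟨k'⁻¹ * s⁻¹ * k, Set.mul_mem_mul (Set.mul_mem_mul (Set.inv_mem_inv.2 hk') rfl) hk, _, _,
    hσ.smul hG k'⁻¹, ?_, by rwa [inv_inv k'], ?_⟩
  · rw [← (hG k').dist_eq, smul_inv_smul]
    exact (dist_triangle _ o _).trans
      (add_le_add hσ0 ((hD ⟨k', hk', rfl⟩).trans (le_max_left D 0)))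
  · rw [mul_smul, mul_smul, inv_smul_smul, inv_smul_smul]
    linarith

theorem exists_finite_forall_geodesic_near (hY : IsGeodesicSpace Y)
    (hG : ∀ g : G, Isometry fun x : Y => g • x) (o : Y)
    (hcoc : ∃ R : ℝ, ∀ x : Y, ∃ g : G, dist x (g • o) ≤ R)
    (hcontr : ∃ γ : ℝ≥0 → Y, IsStronglyContractingRay γ)
    (hne : ¬ ∃ N : ℝ → ℝ, ∀ p : G, MorsePair N o (p • o)) :
    ∃ C D : ℝ, 0 ≤ C ∧ ∀ w : G, D < dist o (w • o) → ∃ F : Set G, F.Finite ∧ ∀ y : Y,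
      ∃ f₁ ∈ F, ∃ f₂ ∈ F, ∀ S, IsGeodesic (f₁ • y) (f₂ • y) S →
        (∃ m ∈ S, dist m o ≤ C) ∧ ∃ m ∈ S, dist m (w • o) ≤ C := by
  obtain ⟨R, hR⟩ := hcoc
  obtain ⟨γ, hγ⟩ := hcontr
  obtain ⟨c, π₀, hγ⟩ := hγ.exists_boundedImage
  have hc := hγ.nonneg
  obtain ⟨E, T, ℓ, R', hE, hT, hℓ, hR', hpush⟩ :=
    exists_finite_forall_exists_boundedImage hY hG hR hγ hne
  refine ⟨2 * c + T + R', 2 * (c + T + R'), by positivity, fun w hw => ?_⟩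
  refine ⟨E ∪ w • E, hE.union (hE.smul_set), fun y => ?_⟩
  obtain ⟨e₁, he₁, τ₁, π₁, h₁, ho₁, h12, ha₁⟩ := hpush y (w • o)
  obtain ⟨e₂, he₂, τ₂, π₂, h₂, ho₂, h21, ha₂⟩ := hpush y (w⁻¹ • o)
  have hw₂ := h₂.smul hG w
  have hwo₂ : dist (w • τ₂ 0) (w • o) ≤ R' := by rwa [(hG w).dist_eq]
  have hwa₂ : ℓ - T < π₂ (w⁻¹ • (w * e₂) • y) := by rwa [mul_smul, inv_smul_smul]
  refine ⟨e₁, Or.inl he₁, w * e₂, Or.inr (Set.smul_mem_smul_set he₂), fun S hS => ⟨?_, ?_⟩⟩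
  · exact h₁.exists_mem_dist_le_of_proj hY hT hℓ hw₂ ho₁ hwo₂ h12 h21 ha₁ hwa₂ hw hS
  · rw [dist_comm] at hw
    exact hw₂.exists_mem_dist_le_of_proj hY hT hℓ h₁ hwo₂ ho₁ h21 h12 hwa₂ ha₁ hw hS.symm

end Separation

section Taming

variable {X : Type*} [MetricSpace X] {A Q : ℝ} {x y : X} {S : Set X}

theorem IsGeodesicSpace.exists_continuousOn_unit_Icc (hX : IsGeodesicSpace X) (x y : X) (a : ℝ) :
    ∃ η : ℝ → X, ContinuousOn η (Set.Icc a (a + 1)) ∧ η a = x ∧ η (a + 1) = y ∧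
      ∀ t ∈ Set.Icc a (a + 1), dist (η t) x ≤ dist x y := by
  obtain ⟨γ, ℓ, hℓ, rfl, rfl, hγ⟩ := hX x y
  have hmaps : Set.MapsTo (fun t => (t - a) * ℓ) (Set.Icc a (a + 1)) (Set.Icc 0 ℓ) := fun t ht =>
    ⟨mul_nonneg (sub_nonneg.2 ht.1) hℓ, mul_le_of_le_one_left hℓ (by linarith [ht.2])⟩
  have hγc : ContinuousOn γ (Set.Icc 0 ℓ) :=
    (LipschitzOnWith.of_dist_le_mul (K := 1) fun s hs t ht => by
      rw [hγ s hs t ht, NNReal.coe_one, one_mul, dist_comm, Real.dist_eq]).continuousOn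
  refine ⟨fun t => γ ((t - a) * ℓ), hγc.comp (by fun_prop) hmaps, by simp, by simp, fun t ht => ?_⟩
  have h0 : (0 : ℝ) ∈ Set.Icc 0 ℓ := ⟨le_rfl, hℓ⟩
  obtain ⟨hpos, hle⟩ := hmaps ht
  rwa [hγ _ ⟨hpos, hle⟩ 0 h0, hγ 0 h0 ℓ ⟨hℓ, le_rfl⟩, zero_sub, abs_neg, abs_of_nonneg hpos,
    sub_zero, abs_of_nonneg hℓ]

theorem exists_continuousOn_glue {Y : Type*} [TopologicalSpace Y] {p q : ℝ → Y} {a b c : ℝ}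
    (hab : a ≤ b) (hbc : b ≤ c) (hp : ContinuousOn p (Set.Icc a b))
    (hq : ContinuousOn q (Set.Icc b c)) (hpq : p b = q b) :
    ∃ r : ℝ → Y, ContinuousOn r (Set.Icc a c) ∧ Set.EqOn r p (Set.Icc a b) ∧
      Set.EqOn r q (Set.Icc b c) := by
  let r : ℝ → Y := fun t => if t ≤ b then p t else q t
  have hrp : Set.EqOn r p (Set.Icc a b) := fun t ht => if_pos ht.2
  have hrq : Set.EqOn r q (Set.Icc b c) := by
    rintro t ⟨hbt, -⟩
    rcases hbt.eq_or_lt with rfl | hbt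
    · exact (if_pos le_rfl).trans hpq
    · exact if_neg hbt.not_ge
  refine ⟨r, ?_, hrp, hrq⟩
  rw [← Set.Icc_union_Icc_eq_Icc hab hbc]
  exact (hp.congr hrp).union_of_isClosed (hq.congr hrq) isClosed_Icc isClosed_Icc

theorem IsGeodesicSpace.exists_continuousOn_interpolation (hX : IsGeodesicSpace X) (v : ℕ → X)
    {D : ℝ} (hD : 0 ≤ D) (n : ℕ) (hv : ∀ i < n, dist (v i) (v (i + 1)) ≤ D) :
    ∃ p : ℝ → X, ContinuousOn p (Set.Icc 0 n) ∧ p 0 = v 0 ∧ p n = v n ∧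
      ∀ t ∈ Set.Icc (0 : ℝ) n, ∃ i ≤ n, dist t i ≤ 1 ∧ dist (p t) (v i) ≤ D := by
  induction n with
  | zero =>
    refine ⟨fun _ => v 0, continuousOn_const, rfl, rfl, fun t ht => ⟨0, le_rfl, ?_, by simpa⟩⟩
    rw [Nat.cast_zero, Set.Icc_self, Set.mem_singleton_iff] at ht
    simp [ht]
  | succ n ih =>
    obtain ⟨p, hp, hp0, hpn, hpv⟩ := ih fun i hi => hv i (hi.trans n.lt_succ_self)
    obtain ⟨η, hη, hηn, hηn', hηd⟩ := hX.exists_continuousOn_unit_Icc (v n) (v (n + 1)) n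
    have hn : (0 : ℝ) ≤ n := n.cast_nonneg
    have hn' : (n : ℝ) ≤ n + 1 := by linarith
    obtain ⟨r, hr, hrp, hrη⟩ := exists_continuousOn_glue hn hn' hp hη (hpn.trans hηn.symm)
    rw [Nat.cast_add_one]
    refine ⟨r, hr, (hrp ⟨le_rfl, hn⟩).trans hp0, (hrη ⟨hn', le_rfl⟩).trans hηn', fun t ht => ?_⟩
    rcases le_total t n with h | h
    · obtain ⟨i, hi, hti, hpi⟩ := hpv t ⟨ht.1, h⟩
      exact ⟨i, hi.trans n.le_succ, hti, by rwa [hrp ⟨ht.1, h⟩]⟩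
    · refine ⟨n, n.le_succ, ?_, ?_⟩
      · rw [dist_comm, dist_eq_sub_of_le h]
        linarith [ht.2]
      · rw [hrη ⟨h, ht.2⟩]
        exact (hηd t ⟨h, ht.2⟩).trans (hv n n.lt_succ_self)

namespace QIEmbeddingOn

theorem of_dist_le {α : Type*} [PseudoMetricSpace α] {f g : α → X} {s : Set α} {k : ℝ}
    (h : QIEmbeddingOn A f s) (hfg : ∀ x ∈ s, dist (f x) (g x) ≤ k) (hA : 1 ≤ A)
    (hk : 0 ≤ k) : QIEmbeddingOn (A * (2 * k + 1)) g s := by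
  intro x hx y hy
  obtain ⟨lower, upper⟩ := h x hx y hy
  have hf : dist (f x) (f y) ≤ dist (g x) (g y) + 2 * k := by
    linarith [dist_triangle4 (f x) (g x) (g y) (f y), hfg x hx, hfg y hy, dist_comm (g y) (f y)]
  have hg : dist (g x) (g y) ≤ dist (f x) (f y) + 2 * k := by
    linarith [dist_triangle4 (g x) (f x) (f y) (g y), hfg x hx, hfg y hy, dist_comm (g x) (f x)]
  have hAk : 0 ≤ A * k := by positivity
  constructor
  · calc dist x y ≤ A * (dist (g x) (g y) + 2 * k) + A := lower.trans (by gcongr)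
      _ ≤ A * (2 * k + 1) * dist (g x) (g y) + A * (2 * k + 1) := by
        nlinarith [mul_nonneg hAk (dist_nonneg (x := g x) (y := g y))]
  · nlinarith [mul_nonneg hAk (dist_nonneg (x := x) (y := y))]

theorem qGeoOn {p : ℝ → X} {I : Set ℝ} (h : QIEmbeddingOn A p I) (hp : ContinuousOn p I)
    (hA : 1 ≤ A) : QGeoOn A I p := by
  refine ⟨hp, fun s hs t ht => ?_⟩
  obtain ⟨lower, upper⟩ := h s hs t ht
  rw [dist_comm s t, Real.dist_eq] at lower upper
  refine ⟨?_, upper⟩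
  have hdiv : |t - s| / A ≤ dist (p s) (p t) + 1 := by
    rw [div_le_iff₀ (by linarith)]
    linarith
  linarith

theorem exists_continuousOn_near {n : ℕ} {q : ℝ → X} (h : QIEmbeddingOn A q (Set.Icc 0 n))
    (hX : IsGeodesicSpace X) (hA : 0 ≤ A) :
    ∃ p : ℝ → X, ContinuousOn p (Set.Icc 0 n) ∧ p 0 = q 0 ∧ p n = q n ∧
      ∀ t ∈ Set.Icc (0 : ℝ) n, dist (q t) (p t) ≤ 4 * A := by
  have hmem : ∀ i ≤ n, (i : ℝ) ∈ Set.Icc (0 : ℝ) n := fun i hi =>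
    ⟨i.cast_nonneg, Nat.cast_le.2 hi⟩
  have hjump : ∀ s ∈ Set.Icc (0 : ℝ) n, ∀ t ∈ Set.Icc (0 : ℝ) n, dist s t ≤ 1 →
      dist (q s) (q t) ≤ 2 * A := fun s hs t ht hst => by
    linarith [(h s hs t ht).2, mul_le_of_le_one_right hA hst]
  obtain ⟨p, hp, hp0, hpn, hpq⟩ := hX.exists_continuousOn_interpolation (fun i => q i)
    (D := 2 * A) (by positivity) n fun i hi => hjump _ (hmem _ hi.le) _ (hmem _ hi) (by simp)
  refine ⟨p, hp, by simpa using hp0, hpn, fun t ht => ?_⟩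
  obtain ⟨i, hi, hti, hpi⟩ := hpq t ht
  linarith [hjump t ht i (hmem i hi) hti, dist_triangle_right (q t) (p t) (q i)]

end QIEmbeddingOn

theorem qiEmbeddingOn_min {a b c : ℝ} (hcb : c ≤ b + 1) :
    QIEmbeddingOn 1 (min · b) (Set.Icc a c) := by
  have hmin : ∀ u ∈ Set.Icc a c, u - 1 ≤ min u b := fun u hu =>
    le_min (by linarith) (by linarith [hu.2])
  intro s hs t ht
  rw [one_mul, one_mul, Real.dist_eq, Real.dist_eq]
  constructor
  · rw [abs_le]
    constructor <;> linarith [hmin s hs, hmin t ht, min_le_left s b, min_le_left t b,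
      le_abs_self (min s b - min t b), neg_abs_le (min s b - min t b)]
  · have := abs_min_sub_min_le_max s b t b
    rw [sub_self, abs_zero, max_eq_left (abs_nonneg _)] at this
    linarith

namespace IsQuasiGeodesic

theorem exists_param_natCast (h : IsQuasiGeodesic Q x y S) (hQ : 1 ≤ Q) :
    ∃ (n : ℕ) (q : ℝ → X), QIEmbeddingOn (2 * Q) q (Set.Icc 0 n) ∧ q 0 = x ∧ q n = y ∧
      q '' Set.Icc 0 n = S := by
  obtain ⟨b, q, hb, hq, rfl, rfl, rfl⟩ := h.exists_param_from 0
  have hbn : b ≤ ⌈b⌉₊ := Nat.le_ceil b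
  have hnb : (⌈b⌉₊ : ℝ) < b + 1 := Nat.ceil_lt_add_one hb
  have hmaps : Set.MapsTo (min · b) (Set.Icc (0 : ℝ) ⌈b⌉₊) (Set.Icc 0 b) := fun t ht =>
    ⟨le_min ht.1 hb, min_le_right _ _⟩
  refine ⟨⌈b⌉₊, q ∘ (min · b), ?_, by simp [hb], by simp [hbn], ?_⟩
  · simpa using hq.comp (qiEmbeddingOn_min hnb.le) hmaps le_rfl hQ
  · rw [Set.image_comp]
    congr 1
    refine hmaps.image_subset.antisymm fun t ht => ⟨t, ⟨ht.1, ht.2.trans hbn⟩, min_eq_left ht.2⟩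

theorem exists_qGeoOn_near (h : IsQuasiGeodesic Q x y S) (hX : IsGeodesicSpace X) (hQ : 1 ≤ Q) :
    ∃ (b : ℝ) (p : ℝ → X), 0 ≤ b ∧ QGeoOn (34 * Q ^ 2) (Set.Icc 0 b) p ∧ p 0 = x ∧ p b = y ∧
      Near (8 * Q) S (p '' Set.Icc 0 b) := by
  obtain ⟨n, q, hq, rfl, rfl, rfl⟩ := h.exists_param_natCast hQ
  obtain ⟨p, hp, hp0, hpn, hqp⟩ := hq.exists_continuousOn_near hX (by positivity)
  have hQ2 : 2 * Q * (2 * (4 * (2 * Q)) + 1) ≤ 34 * Q ^ 2 := by nlinarith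
  refine ⟨n, p, n.cast_nonneg, ?_, hp0, hpn, ?_⟩
  · exact ((hq.of_dist_le hqp (by linarith) (by positivity)).mono_const hQ2).qGeoOn hp
      (by nlinarith)
  · rintro _ ⟨t, ht, rfl⟩
    exact ⟨p t, ⟨t, ht, rfl⟩, by linarith [hqp t ht]⟩

end IsQuasiGeodesic

theorem isGeodesic_image_ray {γ : ℝ≥0 → X} (hγ : Isometry γ) {s t : ℝ≥0} (hst : s ≤ t) :
    IsGeodesic (γ s) (γ t) ((fun u : ℝ => γ u.toNNReal) '' Set.Icc s t) := by
  have h := isGeodesic_image_Icc (η := fun u : ℝ => γ u.toNNReal) (NNReal.coe_le_coe.2 hst)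
    fun u hu v hv => by
      rw [dist_toNNReal_of_isometry hγ (s.2.trans hu.1) (s.2.trans hv.1), dist_comm, Real.dist_eq]
  simpa only [Real.toNNReal_coe] using h

theorem exists_morseSet_range (hX : IsGeodesicSpace X) (M : ℝ → ℝ) :
    ∃ N : ℝ → ℝ, ∀ γ : ℝ≥0 → X, IsMorseRayWith M γ → MorseSet N (Set.range γ) := by
  let D : ℝ → ℝ := fun Q => |M (34 * Q ^ 2)| + 8 * Q
  let N : ℝ → ℝ := fun Q => D Q + (D Q + Q * (Q * (2 * D Q + 2 * Q) + Q) + Q)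
  have hpair : ∀ (γ : ℝ≥0 → X) (s t : ℝ≥0), IsMorseRayWith M γ → s ≤ t →
      MorsePair N (γ s) (γ t) := by
    intro γ s t hγ hst Q hQ S S' hS hS'
    have hD : 0 ≤ D Q := by positivity
    have hgeo := (isGeodesic_image_ray hγ.1 hst).isQuasiGeodesic hQ
    have hnear : ∀ T, IsQuasiGeodesic Q (γ s) (γ t) T →
        Near (D Q) T ((fun u : ℝ => γ u.toNNReal) '' Set.Icc s t) := by
      intro T hT x hx
      obtain ⟨b, p, hb, hp, hp0, hpb, hTp⟩ := hT.exists_qGeoOn_near hX hQ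
      obtain ⟨_, ⟨u, hu, rfl⟩, hxu⟩ := hTp x hx
      obtain ⟨v, hv, huv⟩ := hγ.2 (34 * Q ^ 2) (by nlinarith) s s.2 t t.2
        (NNReal.coe_le_coe.2 hst) p 0 b hb hp (by simpa using hp0) (by simpa using hpb) u hu
      exact ⟨_, ⟨v, hv, rfl⟩, by
        linarith [dist_triangle x (p u) (γ v.toNNReal), le_abs_self (M (34 * Q ^ 2))]⟩
    exact (hnear S hS).trans ((hnear S' hS').of_quasiGeodesic hS' hgeo hQ hD)
  refine ⟨N, fun γ hγ => ?_⟩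
  rintro _ ⟨s, rfl⟩ _ ⟨t, rfl⟩
  rcases le_total s t with h | h
  · exact hpair γ s t hγ h
  · exact (hpair γ t s hγ h).symm

end Taming

namespace IsGeometricAction

variable {G X Y : Type*} [Group G] [MetricSpace X] [MulAction G X] [MetricSpace Y] [MulAction G Y]

theorem countable (hG : IsGeometricAction G X) (x₀ : X) : Countable G := by
  rw [← Set.countable_univ_iff]
  refine (Set.countable_iUnion fun n : ℕ => (hG.2.1 x₀ n).countable).mono fun g _ => ?_
  obtain ⟨n, hn⟩ := exists_nat_ge (dist x₀ (g • x₀))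
  exact Set.mem_iUnion.2 ⟨n, hn⟩

theorem exists_dist_le (hG : IsGeometricAction G X) (x₀ : X) :
    ∃ R : ℝ, ∀ x : X, ∃ g : G, dist x (g • x₀) ≤ R := by
  obtain ⟨hiso, -, K, hK, hKc⟩ := hG
  obtain ⟨R, hR⟩ := hK.isBounded.subset_closedBall x₀
  refine ⟨R, fun x => ?_⟩
  obtain ⟨g, k, hk, rfl⟩ := hKc x
  exact ⟨g, by rw [(hiso g).dist_eq]; exact hR hk⟩

theorem exists_orbit_dist_le_of_dist_le (hX : IsGeometricAction G X) (x₀ : X)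
    (hY : ∀ g : G, Isometry fun y : Y => g • y) (o : Y) (r : ℝ) :
    ∃ C : ℝ, 0 ≤ C ∧ ∀ g h : G, dist (g • x₀) (h • x₀) ≤ r → dist (g • o) (h • o) ≤ C := by
  obtain ⟨C, hC⟩ := ((hX.2.1 x₀ r).image fun g => dist o (g • o)).bddAbove
  refine ⟨max C 0, le_max_right _ _, fun g h hgh => ?_⟩
  rw [← (hX.1 g⁻¹).dist_eq] at hgh
  rw [← (hY g⁻¹).dist_eq]
  simp only [smul_smul, inv_mul_cancel, one_smul] at hgh ⊢
  exact (hC ⟨_, hgh, rfl⟩).trans (le_max_left _ _)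

theorem exists_orbit_dist_le (hX : IsGeodesicSpace X) (hGX : IsGeometricAction G X) (x₀ : X)
    (hGY : ∀ g : G, Isometry fun y : Y => g • y) (o : Y) :
    ∃ A : ℝ, 1 ≤ A ∧ ∀ g h : G, dist (g • o) (h • o) ≤ A * dist (g • x₀) (h • x₀) + A := by
  obtain ⟨R, hR⟩ := hGX.exists_dist_le x₀
  choose κ hκ using hR
  have hR0 : 0 ≤ R := dist_nonneg.trans (hκ x₀)
  obtain ⟨C, hC0, hC⟩ := hGX.exists_orbit_dist_le_of_dist_le x₀ hGY o (2 * R + 1)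
  have hκC : ∀ g : G, dist (g • o) (κ (g • x₀) • o) ≤ C := fun g =>
    hC _ _ (by linarith [hκ (g • x₀)])
  refine ⟨3 * C + 1, by linarith, fun g h => ?_⟩
  obtain ⟨η, ℓ, hℓ, hη0, hηℓ, hη⟩ := hX (g • x₀) (h • x₀)
  have hd : dist (g • x₀) (h • x₀) = ℓ := by
    rw [← hη0, ← hηℓ, hη 0 ⟨le_rfl, hℓ⟩ ℓ ⟨hℓ, le_rfl⟩, sub_zero, abs_of_nonneg hℓ]
  have hstep : ∀ s ∈ Set.Icc 0 ℓ, ∀ t ∈ Set.Icc 0 ℓ, dist s t ≤ 1 →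
      dist (κ (η s) • o) (κ (η t) • o) ≤ C := fun s hs t ht hst => hC _ _ <| by
    have := dist_triangle4_left (η s) (η t) (κ (η s) • x₀) (κ (η t) • x₀)
    rw [hη s hs t ht, ← Real.dist_eq, dist_comm t] at this
    linarith [hκ (η s), hκ (η t)]
  have hchain := dist_le_mul_of_forall_dist_le hC0 one_pos hℓ hstep
  rw [hη0, hηℓ, sub_zero, div_one] at hchain
  rw [hd]
  have hκh := hκC h
  rw [dist_comm] at hκh
  nlinarith [hκC g, dist_triangle4 (g • o) (κ (g • x₀) • o) (κ (h • x₀) • o) (h • o)]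

theorem exists_qiEmbeddingOn_univ (hX : IsGeodesicSpace X) (hGX : IsGeometricAction G X) (x₀ : X)
    (hY : IsGeodesicSpace Y) (hGY : IsGeometricAction G Y) (o : Y) :
    ∃ (f : X → Y) (A : ℝ), 1 ≤ A ∧ QIEmbeddingOn A f Set.univ ∧
      ∀ g : G, ∀ x, dist (f x) (g • o) ≤ A * dist x (g • x₀) + A := by
  obtain ⟨A₁, hA₁, h₁⟩ := hGX.exists_orbit_dist_le hX x₀ hGY.1 o
  obtain ⟨A₂, hA₂, h₂⟩ := hGY.exists_orbit_dist_le hY o hGX.1 x₀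
  obtain ⟨R, hR⟩ := hGX.exists_dist_le x₀
  choose κ hκ using hR
  have hR0 : 0 ≤ R := dist_nonneg.trans (hκ x₀)
  let A := A₁ * (2 * R + 1) + A₂ + 2 * R
  have hA₁A : A₁ ≤ A := by nlinarith
  have hA₂A : A₂ + 2 * R ≤ A := by nlinarith
  have hκ' : ∀ x, dist (κ x • x₀) x ≤ R := fun x => by simpa only [dist_comm] using hκ x
  have hbound : ∀ a b c, a ≤ A₁ * b + A₁ → b ≤ c + 2 * R → 0 ≤ c → a ≤ A * c + A :=
    fun a b c ha hb hc => calc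
      a ≤ A₁ * (c + 2 * R) + A₁ := ha.trans (by gcongr)
      _ ≤ A₁ * c + A := by linarith
      _ ≤ A * c + A := by gcongr
  refine ⟨fun x => κ x • o, A, by linarith, fun x _ x' _ => ⟨?_, ?_⟩, fun g x => ?_⟩
  · calc dist x x' ≤ dist (κ x • x₀) (κ x' • x₀) + 2 * R := by
          linarith [dist_triangle4 x (κ x • x₀) (κ x' • x₀) x', hκ x, hκ' x']
      _ ≤ A₂ * dist (κ x • o) (κ x' • o) + A := by linarith [h₂ (κ x) (κ x')]
      _ ≤ A * dist (κ x • o) (κ x' • o) + A := by gcongr; linarith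
  · exact hbound _ _ _ (h₁ _ _)
      (by linarith [dist_triangle4 (κ x • x₀) x x' (κ x' • x₀), hκ' x, hκ x']) dist_nonneg
  · exact hbound _ _ _ (h₁ _ _)
      (by linarith [dist_triangle (κ x • x₀) x (g • x₀), hκ' x]) dist_nonneg

theorem gromovHyperbolic_of_morsePair (hX : IsGeodesicSpace X) (hGX : IsGeometricAction G X)
    {x₀ : X} {N : ℝ → ℝ} (h : ∀ g : G, MorsePair N x₀ (g • x₀)) : GromovHyperbolic X := by
  obtain ⟨R, hR⟩ := hGX.exists_dist_le x₀
  have hR0 : 0 ≤ R := dist_nonneg.trans (hR x₀).choose_spec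
  refine MorseLTG.gromovHyperbolic_of_morsePair
    (N := fun Q => N (9 * Q * (2 * R + 1) ^ 2) + 2 * R) hX fun x y => ?_
  obtain ⟨g, hg⟩ := hR x
  obtain ⟨k, hk⟩ := hR y
  have hgk := (h (g⁻¹ * k)).smul hGX.1 g
  rw [smul_smul, mul_inv_cancel_left] at hgk
  exact hgk.perturb hX hR0 hg hk

end IsGeometricAction

section Gauges

variable {X : Type*} [MetricSpace X]

theorem exists_countable_gauges_le_add_one (L : {M // IsMorseGauge M} → ℝ) :
    ∃ 𝓜 : Set {M // IsMorseGauge M}, 𝓜.Countable ∧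
      ∀ M₀ : {M // IsMorseGauge M}, ∃ M ∈ 𝓜, ∀ Q ∈ Set.Icc 1 (L M), M₀.1 Q ≤ M.1 Q + 1 := by
  -- The space of gauges is Lindelöf in the compact-open topology.
  let Φ : {M // IsMorseGauge M} → C(ℝ, ℝ) := fun M =>
    ⟨fun t => M.1 (max 1 t), M.2.2.1.comp_continuous (by fun_prop) fun t => le_max_left 1 t⟩
  let _ : TopologicalSpace {M // IsMorseGauge M} := .induced Φ inferInstance
  have := TopologicalSpace.secondCountableTopology_induced {M // IsMorseGauge M} _ Φ
  let U : {M // IsMorseGauge M} → Set {M // IsMorseGauge M} := fun M =>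
    {M₀ | Set.MapsTo (Φ M₀ - Φ M) (Set.Icc 1 (L M)) (Set.Iio 1)}
  have hU : ∀ M, U M ∈ nhds M := fun M => by
    refine IsOpen.mem_nhds ?_ fun _ _ => by simp
    exact (ContinuousMap.isOpen_setOfPred_mapsTo isCompact_Icc isOpen_Iio).preimage
      (continuous_induced_dom.sub continuous_const)
  obtain ⟨𝓜, h𝓜, hcover⟩ := TopologicalSpace.countable_cover_nhds hU
  refine ⟨𝓜, h𝓜, fun M₀ => ?_⟩
  obtain ⟨M, hM, hMM₀⟩ := Set.mem_iUnion₂.1 (hcover.ge (Set.mem_univ M₀))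
  refine ⟨M, hM, fun Q hQ => ?_⟩
  have hlt : M₀.1 (max 1 Q) - M.1 (max 1 Q) < 1 := hMM₀ hQ
  rw [max_eq_right hQ.1] at hlt
  linarith

theorem QGeoOn.dist_le_pow_four {Q L a b t : ℝ} {p : ℝ → X} (hp : QGeoOn Q (Set.Icc a b) p)
    (hL : 0 ≤ L) (hab : dist (p a) (p b) ≤ L) (hQ : L + 2 ≤ Q) (ht : t ∈ Set.Icc a b) :
    dist (p t) (p a) ≤ Q ^ 4 := by
  have hle : a ≤ b := ht.1.trans ht.2
  have hlower := (hp.2 a ⟨le_rfl, hle⟩ b ⟨hle, le_rfl⟩).1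
  have hupper := (hp.2 a ⟨le_rfl, hle⟩ t ht).2
  rw [abs_of_nonneg (sub_nonneg.2 hle)] at hlower
  rw [abs_of_nonneg (sub_nonneg.2 ht.1), dist_comm] at hupper
  have hlen : b - a ≤ (L + Q) * Q := by
    rw [← div_le_iff₀ (by linarith)]
    linarith
  calc dist (p t) (p a) ≤ Q * (t - a) + Q := hupper
    _ ≤ Q * ((L + Q) * Q) + Q := by gcongr; exacts [by linarith, by linarith [ht.2]]
    _ ≤ Q * ((2 * Q - 2) * Q) + Q := by gcongr <;> linarith
    _ ≤ Q ^ 4 := by nlinarith [pow_nonneg (hL.trans (by linarith : L ≤ Q)) 3]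

theorem IsMorseRayWith.locMorseQGeoOn {M₀ M : ℝ → ℝ} {L : ℝ} {γ : ℝ≥0 → X}
    (hγ : IsMorseRayWith M₀ γ) (hL : 0 ≤ L) (hsmall : ∀ Q ∈ Set.Icc 1 (L + 2), M₀ Q ≤ M Q)
    (hlarge : ∀ Q, L + 2 ≤ Q → Q ^ 4 ≤ M Q) :
    LocMorseQGeoOn 1 M L (Set.Ici 0) (fun t : ℝ => γ t.toNNReal) := by
  intro s hs t _ _ hstL
  have hiso : ∀ u ∈ Set.Icc s t, ∀ v ∈ Set.Icc s t,
      dist (γ u.toNNReal) (γ v.toNNReal) = |v - u| := fun u hu v hv => by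
    rw [dist_toNNReal_of_isometry hγ.1 (hs.trans hu.1) (hs.trans hv.1), dist_comm, Real.dist_eq]
  refine ⟨⟨(hγ.1.continuous.comp continuous_real_toNNReal).continuousOn, fun u hu v hv => ?_⟩, ?_⟩
  · rw [hiso u hu v hv]
    constructor <;> linarith
  · intro Q hQ u hu v hv huv p a b hab hp hpa hpb w hw
    rcases le_total Q (L + 2) with hQL | hQL
    · obtain ⟨x, hx, hd⟩ := hγ.2 Q hQ u (hs.trans hu.1) v (hs.trans hv.1) huv p a b hab hp hpa hpb
        w hw
      exact ⟨x, hx, hd.trans (hsmall Q ⟨hQ, hQL⟩)⟩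
    · refine ⟨u, ⟨le_rfl, huv⟩, ?_⟩
      have hpab : dist (p a) (p b) ≤ L := by
        rw [hpa, hpb, hiso u hu v hv, abs_of_nonneg (sub_nonneg.2 huv)]
        linarith [hu.1, hv.2]
      rw [← hpa]
      exact (hp.dist_le_pow_four hL hpab hQL hw).trans (hlarge Q hQL)

theorem IsMorseGauge.add {M M' : ℝ → ℝ} (hM : IsMorseGauge M) (hM' : IsMorseGauge M') :
    IsMorseGauge (M + M') :=
  ⟨hM.1.add hM'.1, hM.2.1.add hM'.2.1, fun t ht => add_nonneg (hM.2.2 t ht) (hM'.2.2 t ht)⟩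

theorem isMorseGauge_one_add_pow (n : ℕ) : IsMorseGauge fun Q => 1 + Q ^ n := by
  refine ⟨fun s hs t _ hst => ?_, by fun_prop, fun t ht => by positivity⟩
  have hs0 : 0 ≤ s := zero_le_one.trans hs
  simp only
  gcongr

theorem MLTG.exists_countable_gauges (h : MLTG X) :
    ∃ 𝓜 : Set (ℝ → ℝ), 𝓜.Countable ∧ (∀ M ∈ 𝓜, IsMorseGauge M) ∧
      ∀ γ : ℝ≥0 → X, IsMorseRay γ → ∃ M ∈ 𝓜, IsMorseRayWith M γ := by
  have hMLTG : ∀ M : {M // IsMorseGauge M}, ∃ (L : ℝ) (M' : ℝ → ℝ), 0 < L ∧ IsMorseGauge M' ∧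
      ∀ I : Set ℝ, I.OrdConnected → ∀ p : ℝ → X,
        LocMorseQGeoOn 1 (M.1 + fun Q => 1 + Q ^ 4) L I p → MorseOn M' I p := fun M => by
    obtain ⟨L, _, M', hL, -, hM', hp⟩ := h 1 le_rfl _ (M.2.add (isMorseGauge_one_add_pow 4))
    exact ⟨L, M', hL, hM', fun I hI p hloc => (hp I hI p hloc).2⟩
  choose L M' hL hM' hglobal using hMLTG
  obtain ⟨𝓜, h𝓜, hcover⟩ := exists_countable_gauges_le_add_one fun M => L M + 2
  refine ⟨M' '' 𝓜, h𝓜.image M', ?_, ?_⟩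
  · rintro _ ⟨M, -, rfl⟩
    exact hM' M
  · rintro γ ⟨M₀, hM₀, hγ⟩
    obtain ⟨M, hM, hle⟩ := hcover ⟨M₀, hM₀⟩
    refine ⟨M' M, ⟨M, hM, rfl⟩, hγ.1, hglobal M _ Set.ordConnected_Ici _ <|
      hγ.locMorseQGeoOn (hL M).le (fun Q hQ => ?_) fun Q hQ => ?_⟩
    · have := pow_nonneg (zero_le_one.trans hQ.1) 4
      simpa only [Pi.add_apply] using (hle Q hQ).trans (by linarith)
    · have := M.2.2.2 Q (by linarith [hL M])
      simp only [Pi.add_apply]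
      linarith

end Gauges

namespace IsStationary

open MeasureTheory Filter Topology

variable {G Z : Type*} [Group G] [MulAction G Z] [MeasurableSpace Z] {μ : PMF G} {ν : Measure Z}
  [IsFiniteMeasure ν] {B W : Set Z} {c : ℝ}

theorem mul_deficit_le (hν : IsStationary μ ν) (hc : ∀ g : G, ν.real (g • B) ≤ c) {g : G}
    (hB : MeasurableSet (g • B)) (h : G) :
    (μ h).toReal * (c - ν.real ((h⁻¹ * g) • B)) ≤ c - ν.real (g • B) := by
  classical
  have hc0 : 0 ≤ c := measureReal_nonneg.trans (hc 1)
  let C := ENNReal.ofReal c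
  have hle : ∀ k : G, ν ((k⁻¹ * g) • B) ≤ C := fun k =>
    (ENNReal.le_ofReal_iff_toReal_le (measure_ne_top _ _) hc0).2 (hc _)
  have key : ν (g • B) + μ h * (C - ν ((h⁻¹ * g) • B)) ≤ C := by
    simp only [hν _ hB, smul_smul]
    rw [← tsum_ite_eq h (fun k => μ k * (C - ν ((k⁻¹ * g) • B))), ← ENNReal.tsum_add]
    calc _ ≤ ∑' k, μ k * C := by
          refine ENNReal.tsum_le_tsum fun k => ?_
          split_ifs
          · rw [← mul_add, add_tsub_cancel_of_le (hle k)]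
          · rw [add_zero]
            gcongr
            exact hle k
      _ = C := by rw [ENNReal.tsum_mul_right, μ.tsum_coe, one_mul]
  have hfin : μ h * (C - ν ((h⁻¹ * g) • B)) ≠ ⊤ :=
    ENNReal.mul_ne_top (μ.apply_ne_top h) (ENNReal.sub_ne_top ENNReal.ofReal_ne_top)
  have := ENNReal.toReal_mono ENNReal.ofReal_ne_top key
  rw [ENNReal.toReal_add (measure_ne_top _ _) hfin, ENNReal.toReal_mul,
    ENNReal.toReal_sub_of_le (hle h) ENNReal.ofReal_ne_top, ENNReal.toReal_ofReal hc0] at this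
  simp only [Measure.real] at this ⊢
  linarith

theorem tendsto_measureReal_smul (hν : IsStationary μ ν)
    (hμ : Subsemigroup.closure μ.support = ⊤) (hB : ∀ g : G, MeasurableSet (g • B))
    (hc : ∀ g : G, ν.real (g • B) ≤ c) {ι : Type*} {l : Filter ι} {u : ι → G}
    (hu : Tendsto (fun i => ν.real (u i • B)) l (𝓝 c)) (h : G) :
    Tendsto (fun i => ν.real ((h * u i) • B)) l (𝓝 c) := by
  obtain ⟨k, rfl⟩ : ∃ k, k⁻¹ = h := ⟨h⁻¹, inv_inv h⟩
  have hk : k ∈ Subsemigroup.closure μ.support := hμ ▸ Subsemigroup.mem_top k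
  induction hk using Subsemigroup.closure_induction generalizing u with
  | mem k hk =>
    have hpos : 0 < (μ k).toReal :=
      ENNReal.toReal_pos ((PMF.mem_support_iff _ _).1 hk) (μ.apply_ne_top k)
    have hlower : ∀ i, c - (c - ν.real (u i • B)) / (μ k).toReal ≤ ν.real ((k⁻¹ * u i) • B) :=
      fun i => by
        rw [sub_le_comm, le_div_iff₀' hpos]
        exact hν.mul_deficit_le hc (hB _) k
    refine tendsto_of_tendsto_of_tendsto_of_le_of_le ?_ tendsto_const_nhds hlower fun i => hc _
    simpa using (hu.const_sub c).div_const (μ k).toReal |>.const_sub c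
  | mul x y _ _ hx hy =>
    simpa only [mul_inv_rev, mul_assoc] using hy (hx hu)

theorem exists_translates_inter (hν : IsStationary μ ν)
    (hμ : Subsemigroup.closure μ.support = ⊤) (hB : ∀ g : G, MeasurableSet (g • B))
    (hBW : ∀ g : G, g • B ⊆ W) (hhalf : ν W / 2 < ν B) {F : Set G} (hF : F.Finite) :
    ∃ g : G, ∀ f₁ ∈ F, ∀ f₂ ∈ F, (((f₁ * g) • B) ∩ ((f₂ * g) • B)).Nonempty := by
  let φ : G → ℝ := fun g => ν.real (g • B)
  have hbdd : BddAbove (Set.range φ) :=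
    ⟨ν.real Set.univ, by rintro _ ⟨g, rfl⟩; exact measureReal_mono (Set.subset_univ _)⟩
  have hφ : ∀ g, φ g ≤ sSup (Set.range φ) := fun g => le_csSup hbdd ⟨g, rfl⟩
  have hlt : ν.real W / 2 < sSup (Set.range φ) := by
    refine lt_of_lt_of_le ?_ (hφ 1)
    have := ENNReal.toReal_strict_mono (measure_ne_top ν B) hhalf
    rw [ENNReal.toReal_div] at this
    simpa [φ, Measure.real] using this
  obtain ⟨v, -, hv, hvφ⟩ := exists_seq_tendsto_sSup (Set.range_nonempty φ) hbdd
  choose u hu using hvφ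
  have hev : ∀ᶠ n in atTop, ∀ f ∈ F, ν.real W / 2 < φ (f * u n) :=
    hF.eventually_all.2 fun f _ => (hν.tendsto_measureReal_smul hμ hB hφ
      (hv.congr fun n => (hu n).symm) f).eventually_const_lt hlt
  obtain ⟨n, hn⟩ := hev.exists
  refine ⟨u n, fun f₁ hf₁ f₂ hf₂ => ?_⟩
  rw [Set.nonempty_iff_ne_empty, ne_eq, ← Set.disjoint_iff_inter_eq_empty]
  intro hdis
  have hunion := measureReal_union (μ := ν) hdis (hB (f₂ * u n))
  have hle : ν.real ((f₁ * u n) • B ∪ (f₂ * u n) • B) ≤ ν.real W :=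
    measureReal_mono (Set.union_subset (hBW _) (hBW _))
  linarith [hn f₁ hf₁, hn f₂ hf₂]

end IsStationary

section Rays

variable {X : Type*} [MetricSpace X] {N : ℝ → ℝ} {d : ℝ} {x : X} {γ : ℝ≥0 → X}

/-- The geodesic rays with `N`-Morse image starting at distance at most `d` from `x`: a version of
`morseRaysFrom` that is stable under changing the starting point by a bounded amount. -/
def morseRaysNear (N : ℝ → ℝ) (d : ℝ) (x : X) : Set (ℝ≥0 → X) :=
  {γ | Isometry γ ∧ dist x (γ 0) ≤ d ∧ MorseSet N (Set.range γ)}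

theorem exists_quasiGeodesic_joining_rays (hX : IsGeodesicSpace X) (N : ℝ → ℝ) :
    ∃ N' : ℝ → ℝ, ∀ α β : ℝ≥0 → X, Isometry α → Isometry β → MorseSet N (Set.range α) →
      MorseSet N (Set.range β) → Metric.hausdorffEDist (Set.range α) (Set.range β) ≠ ⊤ →
      ∃ P, IsQuasiGeodesic 9 (α 0) (β 0) P ∧ MorseSet N' P := by
  obtain ⟨N', hN'⟩ := exists_morseSet_joining hX N
  refine ⟨N', fun α β hα hβ hαN hβN hfin => ?_⟩
  obtain ⟨e, he, -⟩ := ENNReal.lt_iff_exists_nnreal_btwn.1 (lt_top_iff_ne_top.2 hfin)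
  let T : ℝ≥0 := 6 * (nndist (α 0) (β 0) + e + 1)
  obtain ⟨_, ⟨t, rfl⟩, ht⟩ := Metric.exists_edist_lt_of_hausdorffEDist_lt (Set.mem_range_self T) he
  rw [edist_lt_coe, ← NNReal.coe_lt_coe, coe_nndist] at ht
  have hsub : ∀ (γ : ℝ≥0 → X) (I : Set ℝ), (fun u : ℝ => γ u.toNNReal) '' I ⊆ Set.range γ := by
    rintro γ I _ ⟨u, -, rfl⟩
    exact ⟨_, rfl⟩
  refine hN' _ _ _ _ _ _ (isGeodesic_image_ray hα (zero_le : 0 ≤ T))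
    (isGeodesic_image_ray hβ (zero_le : 0 ≤ t)) (hαN.subset (hsub α _)) (hβN.subset (hsub β _)) ?_
  have hT : dist (α 0) (α T) = 6 * (dist (α 0) (β 0) + e + 1) := by
    rw [hα.dist_eq, NNReal.dist_eq, NNReal.coe_zero, zero_sub, abs_neg, NNReal.abs_eq]
    rfl
  rw [hT]
  gcongr

theorem MorseSet.near_of_quasiGeodesic (hX : IsGeodesicSpace X) {Q k : ℝ} {x y x' y' : X}
    {P T : Set X} (hP : IsQuasiGeodesic Q x y P) (hPN : MorseSet N P)
    (hT : IsQuasiGeodesic Q x' y' T) (hQ : 1 ≤ Q) (hk : 0 ≤ k) (hx : dist x x' ≤ k)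
    (hy : dist y y' ≤ k) : Near (N (9 * Q * (2 * k + 1) ^ 2)) T P := by
  obtain ⟨T', hTT', hT', -⟩ := hT.exists_extend hX hQ hk hx hy
  have hQk : Q ≤ 9 * Q * (2 * k + 1) ^ 2 := by
    have hQ₀ : 0 ≤ Q := zero_le_one.trans hQ
    nlinarith [mul_nonneg hQ₀ hk, mul_nonneg hQ₀ (sq_nonneg k)]
  exact fun u hu => hPN x hP.left_mem y hP.right_mem _ (hQ.trans hQk) T' P hT' (hP.mono hQk) u
    (hTT' hu)

variable {G : Type*} [Group G] [MulAction G X] {M : ℝ → ℝ} {x₀ : X}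

theorem IsMorseRayWith.smul (hG : ∀ g : G, Isometry fun x : X => g • x) (g : G)
    (h : IsMorseRayWith M γ) : IsMorseRayWith M fun t => g • γ t := by
  refine ⟨(hG g).comp h.1, fun Q hQ s hs t ht hst p a b hab hp hpa hpb u hu => ?_⟩
  have hp' : QGeoOn Q (Set.Icc a b) fun t => g⁻¹ • p t := by
    refine ⟨(hG g⁻¹).continuous.comp_continuousOn hp.1, fun s hs t ht => ?_⟩
    rw [(hG g⁻¹).dist_eq]
    exact hp.2 s hs t ht
  obtain ⟨v, hv, hd⟩ := h.2 Q hQ s hs t ht hst _ a b hab hp' (by simp [hpa]) (by simp [hpb]) u hu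
  refine ⟨v, hv, ?_⟩
  rw [← (hG g).dist_eq] at hd
  simpa using hd

theorem smul_mem_orbitMorseRays (hG : ∀ g : G, Isometry fun x : X => g • x) (g : G)
    (h : γ ∈ orbitMorseRays G x₀) : (fun t => g • γ t) ∈ orbitMorseRays G x₀ := by
  obtain ⟨⟨k, hk⟩, M, hM, hγ⟩ := h
  exact ⟨⟨g * k, by simp only [mul_smul, ← hk]⟩, M, hM, hγ.smul hG g⟩

theorem morseRaysFrom_subset_orbitMorseRays (hM : IsMorseGauge M) (x₀ : X) :
    morseRaysFrom M x₀ ⊆ orbitMorseRays G x₀ :=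
  fun _ h => ⟨⟨1, by simp [h.1]⟩, M, hM, h.2⟩

theorem smul_mem_morseRaysNear (hG : ∀ g : G, Isometry fun x : X => g • x) (g : G)
    (h : γ ∈ morseRaysNear N d x) : (fun t => g • γ t) ∈ morseRaysNear N d (g • x) := by
  refine ⟨(hG g).comp h.1, by rw [(hG g).dist_eq]; exact h.2.1, ?_⟩
  rintro _ ⟨s, rfl⟩ _ ⟨t, rfl⟩
  exact (h.2.2 _ ⟨s, rfl⟩ _ ⟨t, rfl⟩).smul hG g

end Rays

open MeasureTheory in
theorem exists_finset_half_measure_iUnion_lt {α ι : Type*} [MeasurableSpace α] [Countable ι]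
    {ν : Measure α} [IsFiniteMeasure ν] {E : ι → Set α} (hE : ν (⋃ i, E i) ≠ 0) :
    ∃ s : Finset ι, ν (⋃ i, E i) / 2 < ν (⋃ i ∈ s, E i) := by
  have hdir : Directed (· ⊆ ·) fun s : Finset ι => ⋃ i ∈ s, E i :=
    Monotone.directed_le fun s t hst => Set.biUnion_subset_biUnion_left hst
  have hsup : ν (⋃ i, E i) = ⨆ s : Finset ι, ν (⋃ i ∈ s, E i) := by
    rw [Set.iUnion_eq_iUnion_finset, hdir.measure_iUnion]
  rw [← lt_iSup_iff, ← hsup]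
  exact ENNReal.half_lt_self hE (measure_ne_top _ _)

section Boundary

variable {G X Z : Type*} [Group G] [MetricSpace X] [MulAction G X] [MulAction G Z]
  {ρ : (ℝ≥0 → X) → Z} {x₀ : X} {N : ℝ → ℝ} {d : ℝ} {B : Set Z} {𝓜 : Set (ℝ → ℝ)}

theorem smul_image_orbitMorseRays_subset (hG : ∀ g : G, Isometry fun x : X => g • x)
    (hequi : ∀ g : G, ∀ γ ∈ orbitMorseRays G x₀, ρ (fun t => g • γ t) = g • ρ γ) (g : G) :
    g • ρ '' orbitMorseRays G x₀ ⊆ ρ '' orbitMorseRays G x₀ := by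
  rintro _ ⟨_, ⟨γ, hγ, rfl⟩, rfl⟩
  exact ⟨_, smul_mem_orbitMorseRays hG g hγ, hequi g γ hγ⟩

theorem image_orbitMorseRays_eq_iUnion (hG : ∀ g : G, Isometry fun x : X => g • x)
    (hequi : ∀ g : G, ∀ γ ∈ orbitMorseRays G x₀, ρ (fun t => g • γ t) = g • ρ γ)
    (h𝓜 : ∀ M ∈ 𝓜, IsMorseGauge M)
    (hcover : ∀ γ : ℝ≥0 → X, IsMorseRay γ → ∃ M ∈ 𝓜, IsMorseRayWith M γ) :
    ρ '' orbitMorseRays G x₀ = ⋃ i : G × 𝓜, i.1 • ρ '' morseRaysFrom i.2.1 x₀ := by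
  refine Set.Subset.antisymm ?_ (Set.iUnion_subset fun i => ?_)
  · rintro _ ⟨γ, ⟨⟨g, hg⟩, hM⟩, rfl⟩
    obtain ⟨M, hM𝓜, hMγ⟩ := hcover γ hM
    have hfrom : (fun t => g⁻¹ • γ t) ∈ morseRaysFrom M x₀ :=
      ⟨by simp only [← hg, inv_smul_smul], hMγ.smul hG g⁻¹⟩
    refine Set.mem_iUnion.2 ⟨(g, ⟨M, hM𝓜⟩), g⁻¹ • ρ γ, ⟨_, hfrom, ?_⟩, smul_inv_smul g _⟩
    exact hequi g⁻¹ γ ⟨⟨g, hg⟩, hM⟩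
  · refine (Set.smul_set_mono (Set.image_mono ?_)).trans
      (smul_image_orbitMorseRays_subset hG hequi i.1)
    exact morseRaysFrom_subset_orbitMorseRays (h𝓜 _ i.2.2) x₀

theorem exists_biUnion_subset_image_morseRaysNear (hX : IsGeodesicSpace X)
    (hG : ∀ g : G, Isometry fun x : X => g • x)
    (hequi : ∀ g : G, ∀ γ ∈ orbitMorseRays G x₀, ρ (fun t => g • γ t) = g • ρ γ)
    (h𝓜 : ∀ M ∈ 𝓜, IsMorseGauge M) (s : Finset (G × 𝓜)) :
    ∃ (N : ℝ → ℝ) (d : ℝ), 0 ≤ d ∧ ⋃ i ∈ s, i.1 • ρ '' morseRaysFrom i.2.1 x₀ ⊆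
      ρ '' (orbitMorseRays G x₀ ∩ morseRaysNear N d x₀) := by
  classical
  choose N hN using exists_morseSet_range hX
  obtain ⟨⟨N', d⟩, hle⟩ := (s.image fun i => (N i.2, dist x₀ (i.1 • x₀))).exists_le
  refine ⟨N', max d 0, le_max_right _ _, Set.iUnion₂_subset fun i hi => ?_⟩
  rintro _ ⟨_, ⟨γ, hγ, rfl⟩, rfl⟩
  obtain ⟨hNi, hdi⟩ := hle _ (Finset.mem_image_of_mem _ hi)
  have hγG := morseRaysFrom_subset_orbitMorseRays (G := G) (h𝓜 _ i.2.2) x₀ hγ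
  have hγi := hγ.2.smul hG i.1
  refine ⟨_, ⟨smul_mem_orbitMorseRays hG i.1 hγG, hγi.1, ?_, (hN _ _ hγi).mono hNi⟩,
    hequi _ _ hγG⟩
  simpa only [hγ.1] using hdi.trans (le_max_left d 0)

theorem exists_rays_of_smul_inter_nonempty (hG : ∀ g : G, Isometry fun x : X => g • x)
    (hsep : ∀ γ₁ ∈ orbitMorseRays G x₀, ∀ γ₂ ∈ orbitMorseRays G x₀,
      Metric.hausdorffEDist (Set.range γ₁) (Set.range γ₂) = ⊤ → ρ γ₁ ≠ ρ γ₂)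
    (hequi : ∀ g : G, ∀ γ ∈ orbitMorseRays G x₀, ρ (fun t => g • γ t) = g • ρ γ)
    (hB : B ⊆ ρ '' (orbitMorseRays G x₀ ∩ morseRaysNear N d x₀)) {g h : G}
    (hgh : ((g • B) ∩ (h • B)).Nonempty) :
    ∃ α ∈ morseRaysNear N d (g • x₀), ∃ β ∈ morseRaysNear N d (h • x₀),
      Metric.hausdorffEDist (Set.range α) (Set.range β) ≠ ⊤ := by
  have hlift : ∀ g : G, ∀ z ∈ g • B,
      ∃ α ∈ orbitMorseRays G x₀ ∩ morseRaysNear N d (g • x₀), ρ α = z := by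
    rintro g _ ⟨z, hz, rfl⟩
    obtain ⟨α, hα, rfl⟩ := hB hz
    exact ⟨_, ⟨smul_mem_orbitMorseRays hG g hα.1, smul_mem_morseRaysNear hG g hα.2⟩,
      hequi g α hα.1⟩
  obtain ⟨z, hzg, hzh⟩ := hgh
  obtain ⟨α, hα, hαz⟩ := hlift g z hzg
  obtain ⟨β, hβ, hβz⟩ := hlift h z hzh
  exact ⟨α, hα.2, β, hβ.2, fun htop => hsep α hα.1 β hβ.1 htop (hαz.trans hβz.symm)⟩

open MeasureTheory in
theorem exists_isCompact_half_measure_lt [TopologicalSpace Z] [MeasurableSpace Z]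
    [ContinuousConstSMul G Z] {ν : Measure Z} [IsFiniteMeasure ν] [Countable G]
    (hX : IsGeodesicSpace X) (hG : ∀ g : G, Isometry fun x : X => g • x)
    (hequi : ∀ g : G, ∀ γ ∈ orbitMorseRays G x₀, ρ (fun t => g • γ t) = g • ρ γ)
    (h𝓜c : 𝓜.Countable) (h𝓜 : ∀ M ∈ 𝓜, IsMorseGauge M)
    (hcover : ∀ γ : ℝ≥0 → X, IsMorseRay γ → ∃ M ∈ 𝓜, IsMorseRayWith M γ)
    (hcpt : ∀ M ∈ 𝓜, IsCompact (ρ '' morseRaysFrom M x₀))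
    (hpos : ν (ρ '' orbitMorseRays G x₀) ≠ 0) :
    ∃ (N : ℝ → ℝ) (d : ℝ) (B : Set Z), 0 ≤ d ∧ IsCompact B ∧
      ν (ρ '' orbitMorseRays G x₀) / 2 < ν B ∧
      B ⊆ ρ '' (orbitMorseRays G x₀ ∩ morseRaysNear N d x₀) := by
  have := h𝓜c.to_subtype
  have hunion := image_orbitMorseRays_eq_iUnion hG hequi h𝓜 hcover
  rw [hunion] at hpos
  obtain ⟨s, hs⟩ := exists_finset_half_measure_iUnion_lt hpos
  obtain ⟨N, d, hd, hsub⟩ := exists_biUnion_subset_image_morseRaysNear hX hG hequi h𝓜 s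
  exact ⟨N, d, _, hd, s.isCompact_biUnion fun i _ => (hcpt _ i.2.2).smul i.1,
    by rwa [hunion], hsub⟩

end Boundary

section Transfer

variable {G X Y : Type*} [Group G] [MetricSpace X] [MulAction G X] [MetricSpace Y] [MulAction G Y]

namespace IsGeometricAction

theorem exists_forall_morsePair_of_exists_forall (hX : IsGeodesicSpace X)
    (hGX : IsGeometricAction G X) (x₀ : X) (hY : IsGeodesicSpace Y)
    (hGY : IsGeometricAction G Y) (o : Y)
    (h : ∃ N : ℝ → ℝ, ∀ g : G, MorsePair N o (g • o)) :
    ∃ N : ℝ → ℝ, ∀ g : G, MorsePair N x₀ (g • x₀) := by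
  obtain ⟨N, hN⟩ := h
  obtain ⟨f, A, hA, hf, hfG⟩ := hGX.exists_qiEmbeddingOn_univ hX x₀ hY hGY o
  have hfA : ∀ g : G, dist (f (g • x₀)) (g • o) ≤ A := fun g => by simpa using hfG g (g • x₀)
  exact ⟨_, fun g => ((hN g).perturb hY (zero_le_one.trans hA) (by simpa using hfA 1)
    (hfA g)).of_map hf hA⟩

theorem exists_far_not_morsePair (hX : IsGeodesicSpace X) (hGX : IsGeometricAction G X)
    (hhyp : ¬ GromovHyperbolic X) (x₀ : X) (hY : IsGeodesicSpace Y)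
    (hGY : IsGeometricAction G Y) (o : Y) (N : ℝ → ℝ) (D : ℝ) :
    ∃ w : G, D < dist o (w • o) ∧ ¬ MorsePair N x₀ (w • x₀) := by
  obtain ⟨A, hA, horbit⟩ := hGY.exists_orbit_dist_le hY o hGX.1 x₀
  by_contra! hcon
  refine hhyp (hGX.gromovHyperbolic_of_morsePair hX (x₀ := x₀)
    (N := fun Q => max (N Q) (Q * (Q * (A * D + A) + Q) + Q)) fun w => ?_)
  rcases lt_or_ge D (dist o (w • o)) with hfar | hclose
  · exact (hcon w hfar).mono fun Q => le_max_left _ _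
  · have hdist : dist x₀ (w • x₀) ≤ A * D + A := calc
      dist x₀ (w • x₀) ≤ A * dist o (w • o) + A := by simpa using horbit 1 w
      _ ≤ A * D + A := by gcongr
    exact (MorsePair.of_dist_le hdist).mono fun Q => le_max_right _ _

theorem exists_gauge_morsePair_of_rays (hX : IsGeodesicSpace X) (hGX : IsGeometricAction G X)
    (x₀ : X) (hY : IsGeodesicSpace Y) (hGY : IsGeometricAction G Y) (o : Y) (N : ℝ → ℝ)
    {C d : ℝ} (hC : 0 ≤ C) (hd : 0 ≤ d) :
    ∃ N' : ℝ → ℝ, ∀ g h w : G, ∀ α ∈ morseRaysNear N d (g • x₀),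
      ∀ β ∈ morseRaysNear N d (h • x₀),
      Metric.hausdorffEDist (Set.range α) (Set.range β) ≠ ⊤ →
      ∀ S, IsGeodesic (g • o) (h • o) S → (∃ m ∈ S, dist m o ≤ C) →
      (∃ m ∈ S, dist m (w • o) ≤ C) → MorsePair N' x₀ (w • x₀) := by
  obtain ⟨f, A, hA, hf, hfG⟩ := hGY.exists_qiEmbeddingOn_univ hY o hX hGX x₀
  obtain ⟨N₁, hN₁⟩ := exists_quasiGeodesic_joining_rays hX N
  let Q := 9 * A
  let r := N₁ (9 * Q * (2 * (A + d) + 1) ^ 2)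
  have hk : 0 ≤ A * C + A + |r| := by positivity
  refine ⟨fun q => N₁ (9 * q * (2 * (A * C + A + |r|) + 1) ^ 2) + 2 * (A * C + A + |r|),
    fun g h w α hα β hβ hαβ S hS ⟨m, hm, hmo⟩ ⟨m', hm', hmo'⟩ => ?_⟩
  obtain ⟨P, hP, hPN⟩ := hN₁ α β hα.1 hβ.1 hα.2.2 hβ.2.2 hαβ
  have hend : ∀ (k : G) (γ : ℝ≥0 → X), γ ∈ morseRaysNear N d (k • x₀) →
      dist (γ 0) (f (k • o)) ≤ A + d := fun k γ hγ => by
    have hfk : dist (f (k • o)) (k • x₀) ≤ A := by simpa using hfG k (k • o)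
    linarith [dist_triangle (f (k • o)) (k • x₀) (γ 0), hγ.2.1, dist_comm (f (k • o)) (γ 0)]
  have hfS : IsQuasiGeodesic Q (f (g • o)) (f (h • o)) (f '' S) :=
    ((hS.isQuasiGeodesic le_rfl).map hf le_rfl hA).mono (by linarith)
  have hnear : Near r (f '' S) P := MorseSet.near_of_quasiGeodesic hX (hP.mono (by linarith)) hPN
    hfS (by linarith) (by linarith) (hend g α hα) (hend h β hβ)
  have hclose : ∀ m ∈ S, ∀ k : G, dist m (k • o) ≤ C →
      ∃ u ∈ P, dist (k • x₀) u ≤ A * C + A + |r| := fun m hm k hmk => by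
    obtain ⟨u, hu, hmu⟩ := hnear (f m) ⟨m, hm, rfl⟩
    refine ⟨u, hu, (dist_triangle_left _ _ (f m)).trans (add_le_add ?_ (hmu.trans (le_abs_self r)))⟩
    exact (hfG k m).trans (by gcongr)
  obtain ⟨u, hu, hd₁⟩ := hclose m hm 1 (by rwa [one_smul])
  obtain ⟨v, hv, hd₂⟩ := hclose m' hm' w hmo'
  rw [one_smul] at hd₁
  exact (hPN u hu v hv).perturb hX hk hd₁ hd₂

end IsGeometricAction

end Transfer

end MorseLTG

open MorseLTG in
theorem stmt12_general {G : Type*} [Group G] {X : Type*} [MetricSpace X] (hX : IsGeodesicSpace X)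
    (x₀ : X) [MulAction G X] (hGX : IsGeometricAction G X) (hnh : ¬ GromovHyperbolic X)
    {X' : Type*} [MetricSpace X'] (hX' : IsGeodesicSpace X')
    [MulAction G X'] (hGX' : IsGeometricAction G X')
    (hcontr : ∃ γ : ℝ≥0 → X', IsStronglyContractingRay γ)
    {Z : Type*} [TopologicalSpace Z] [T2Space Z] [MeasurableSpace Z] [OpensMeasurableSpace Z]
    [MulAction G Z] [ContinuousConstSMul G Z] (ρ : (ℝ≥0 → X) → Z)
    (hsep : ∀ γ₁ ∈ orbitMorseRays G x₀, ∀ γ₂ ∈ orbitMorseRays G x₀,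
      Metric.hausdorffEDist (Set.range γ₁) (Set.range γ₂) = ⊤ → ρ γ₁ ≠ ρ γ₂)
    (hequi : ∀ g : G, ∀ γ ∈ orbitMorseRays G x₀, ρ (fun t => g • γ t) = g • ρ γ)
    {𝓜 : Set (ℝ → ℝ)} (h𝓜c : 𝓜.Countable) (h𝓜 : ∀ M ∈ 𝓜, IsMorseGauge M)
    (hcover : ∀ γ : ℝ≥0 → X, IsMorseRay γ → ∃ M ∈ 𝓜, IsMorseRayWith M γ)
    (hcpt : ∀ M ∈ 𝓜, IsCompact (ρ '' morseRaysFrom M x₀))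
    (μ : PMF G) (hμ : Subsemigroup.closure μ.support = ⊤)
    (ν : MeasureTheory.Measure Z) [MeasureTheory.IsFiniteMeasure ν] (hν : IsStationary μ ν) :
    ν (ρ '' orbitMorseRays G x₀) = 0 := by
  by_contra hpos
  have := hGX.countable x₀
  obtain ⟨N, d, B, hd, hBc, hhalf, hB⟩ :=
    exists_isCompact_half_measure_lt hX hGX.1 hequi h𝓜c h𝓜 hcover hcpt hpos
  let o : X' := hcontr.choose 0
  have hne : ¬ ∃ N : ℝ → ℝ, ∀ g : G, MorsePair N o (g • o) := fun h =>
    have ⟨_, hN⟩ := hGX.exists_forall_morsePair_of_exists_forall hX x₀ hX' hGX' o h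
    hnh (hGX.gromovHyperbolic_of_morsePair hX hN)
  obtain ⟨C, D, hC, hnear⟩ :=
    exists_finite_forall_geodesic_near hX' hGX'.1 o (hGX'.exists_dist_le o) hcontr hne
  obtain ⟨N', hN'⟩ := hGX.exists_gauge_morsePair_of_rays hX x₀ hX' hGX' o N hC hd
  obtain ⟨w, hw, hwN⟩ := hGX.exists_far_not_morsePair hX hnh x₀ hX' hGX' o N' D
  obtain ⟨F, hF, hFnear⟩ := hnear w hw
  obtain ⟨g, hg⟩ := hν.exists_translates_inter hμ (fun g => (hBc.smul g).isClosed.measurableSet)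
    (fun g => (Set.smul_set_mono (hB.trans (Set.image_mono Set.inter_subset_left))).trans
      (smul_image_orbitMorseRays_subset hGX.1 hequi g)) hhalf hF
  obtain ⟨f₁, hf₁, f₂, hf₂, hS⟩ := hFnear (g • o)
  simp only [← mul_smul] at hS
  obtain ⟨α, hα, β, hβ, hαβ⟩ :=
    exists_rays_of_smul_inter_nonempty hGX.1 hsep hequi hB (hg f₁ hf₁ f₂ hf₂)
  obtain ⟨S, hSgeo⟩ := hX'.exists_isGeodesic ((f₁ * g) • o) ((f₂ * g) • o)
  exact hwN (hN' _ _ w α hα β hβ hαβ S hSgeo (hS S hSgeo).1 (hS S hSgeo).2)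

open MorseLTG in
theorem stmt12 {G : Type*} [Group G] [Group.FG G]
    {X : Type*} [MetricSpace X] [ProperSpace X] (hX : IsGeodesicSpace X) (x₀ : X)
    [MulAction G X] (hGX : IsGeometricAction G X)
    (hnh : ¬ GromovHyperbolic X) (hmltg : MLTG X)
    {X' : Type*} [MetricSpace X'] (hX' : IsGeodesicSpace X')
    [MulAction G X'] (hGX' : IsGeometricAction G X')
    (hcontr : ∃ γ : ℝ≥0 → X', IsStronglyContractingRay γ)
    {Z : Type*} [TopologicalSpace Z] [TopologicalSpace.MetrizableSpace Z]
    [MeasurableSpace Z] [BorelSpace Z] [MulAction G Z] [ContinuousConstSMul G Z]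
    (ρ : (ℝ≥0 → X) → Z)
    (hsep : ∀ γ₁ ∈ orbitMorseRays G x₀, ∀ γ₂ ∈ orbitMorseRays G x₀,
      Metric.hausdorffEDist (Set.range γ₁) (Set.range γ₂) = ⊤ → ρ γ₁ ≠ ρ γ₂)
    (hequi : ∀ g : G, ∀ γ ∈ orbitMorseRays G x₀, ρ (fun t => g • γ t) = g • ρ γ)
    (hcpt : ∀ M : ℝ → ℝ, IsMorseGauge M → IsCompact (ρ '' morseRaysFrom M x₀))
    (μ : PMF G) (hμ : Subsemigroup.closure μ.support = ⊤)
    (ν : MeasureTheory.Measure Z) [MeasureTheory.IsProbabilityMeasure ν]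
    (hν : IsStationary μ ν) :
    ν (ρ '' orbitMorseRays G x₀) = 0 := by
  obtain ⟨𝓜, h𝓜c, h𝓜, hcover⟩ := hmltg.exists_countable_gauges
  exact stmt12_general hX x₀ hGX hnh hX' hGX' hcontr ρ hsep hequi h𝓜c h𝓜 hcover
    (fun M hM => hcpt M (h𝓜 M hM)) μ hμ ν hν
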